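/- arXiv:1908.05283 — 13 statements merged into one kernel-verified Lean document; each statement's English description precedes it below -/
import Mathlib

section
/- Let v : Ω → ℝ satisfy ((H + K·I)v)(α) ≥ 0 for every α ∈ Ω. Then v(α) ≥ 0 for every α ∈ Ω. (Discrete maximum principle for the Fock-space Hamiltonian; Lemma 1, nonnegativity part.) -/
open Matrix Finset

/-- **Discrete maximum principle for the Fock-space Hamiltonian** (Lemma 1, nonnegativity part):
if `((H + K·I) v) α ≥ 0` for all `α`, then `v α ≥ 0` for all `α`. -/
theorem mbll_maximum_principle
    {Ω : Type*} [Fintype Ω] [DecidableEq Ω] [Nonempty Ω]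
    (G : SimpleGraph Ω) [DecidableRel G.Adj] (hG : G.Connected)
    (t : ℝ) (ht : 0 < t) (V : Ω → ℝ) (K : ℝ)
    (H : Matrix Ω Ω ℝ)
    (hH : ∀ α β, H α β = if α = β then V α else if G.Adj α β then -t else 0)
    (hK : ∀ α, 0 ≤ K + V α - t * (G.degree α + 1))
    (v : Ω → ℝ)
    (hv : ∀ α, 0 ≤ ((H + K • (1 : Matrix Ω Ω ℝ)) *ᵥ v) α) :
    ∀ α, 0 ≤ v α := by
  obtain ⟨a, ha⟩ := Finite.exists_min v
  have key : ((H + K • (1 : Matrix Ω Ω ℝ)) *ᵥ v) a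
      = (K + V a) * v a - t * ∑ b ∈ G.neighborFinset a, v b := by
    have hN : ∑ b ∈ G.neighborFinset a, v b = ∑ b, if G.Adj a b then v b else 0 := by
      rw [← Finset.sum_filter]
      congr 1
      ext b
      simp
    have hD : (K + V a) * v a = ∑ b, if a = b then (K + V a) * v b else 0 := by
      simp
    rw [hN, hD, Finset.mul_sum, ← Finset.sum_sub_distrib]
    simp only [Matrix.mulVec, dotProduct]
    refine Finset.sum_congr rfl fun b _ => ?_
    simp only [Matrix.add_apply, Matrix.smul_apply, Matrix.one_apply, hH, smul_eq_mul]
    by_cases hab : a = b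
    · subst hab
      simp [add_comm]
    · by_cases hadj : G.Adj a b <;> simp [hab, hadj]
  have hsum : (G.degree a : ℝ) * v a ≤ ∑ b ∈ G.neighborFinset a, v b := by
    have h := Finset.card_nsmul_le_sum (G.neighborFinset a) v (v a) (fun b _ => ha b)
    rwa [G.card_neighborFinset_eq_degree, nsmul_eq_mul] at h
  have h0 := hv a
  rw [key] at h0
  have hm : 0 ≤ v a := by
    by_contra hneg
    push Not at hneg
    have h1 := mul_le_mul_of_nonneg_left hsum ht.le
    have h2 := mul_nonpos_of_nonneg_of_nonpos (hK a) hneg.le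
    have h3 := mul_neg_of_pos_of_neg ht hneg
    nlinarith
  exact fun α => hm.trans (ha α)
end

section
/- Let v : Ω → ℝ satisfy ((H + K·I)v)(α) ≥ 0 for every α ∈ Ω, and suppose there exists β ∈ Ω with ((H + K·I)v)(β) > 0. Then v(α) > 0 for every α ∈ Ω. (Lemma 1, strict positivity part; uses connectedness of G.) -/
open Matrix Finset

/-- **Lemma 1, strict positivity part**: if `((H + K·I) v) α ≥ 0` for all `α` and
`((H + K·I) v) β > 0` for some `β`, then `v α > 0` for all `α`
(uses connectedness of the Fock-space graph `G`). -/
theorem mbll_strict_positivity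
    {Ω : Type*} [Fintype Ω] [DecidableEq Ω] [Nonempty Ω]
    (G : SimpleGraph Ω) [DecidableRel G.Adj] (hG : G.Connected)
    (t : ℝ) (ht : 0 < t) (V : Ω → ℝ) (K : ℝ)
    (H : Matrix Ω Ω ℝ)
    (hH : ∀ α β, H α β = if α = β then V α else if G.Adj α β then -t else 0)
    (hK : ∀ α, 0 ≤ K + V α - t * (G.degree α + 1))
    (v : Ω → ℝ)
    (hv : ∀ α, 0 ≤ ((H + K • (1 : Matrix Ω Ω ℝ)) *ᵥ v) α)
    (hstrict : ∃ β, 0 < ((H + K • (1 : Matrix Ω Ω ℝ)) *ᵥ v) β) :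
    ∀ α, 0 < v α := by
  have key : ∀ α, ((H + K • (1 : Matrix Ω Ω ℝ)) *ᵥ v) α
      = (K + V α) * v α - t * ∑ β ∈ G.neighborFinset α, v β := by
    intro α
    have h1 : ∀ β, H α β * v β = (if α = β then V α * v β else 0)
        + (if G.Adj α β then -t * v β else 0) := by
      intro β
      rw [hH]
      by_cases h : α = β
      · subst h; simp
      · simp [h]
    have h2 : (H *ᵥ v) α = V α * v α + -t * ∑ β ∈ G.neighborFinset α, v β := by
      simp only [Matrix.mulVec, dotProduct]
      rw [Finset.sum_congr rfl (fun β _ => h1 β), Finset.sum_add_distrib,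
        ← Finset.sum_filter (fun β => G.Adj α β), ← Finset.mul_sum,
        G.neighborFinset_eq_filter]
      simp
    rw [Matrix.add_mulVec, Matrix.smul_mulVec, Matrix.one_mulVec, Pi.add_apply, h2]
    simp only [Pi.smul_apply, smul_eq_mul]
    ring
  simp only [key] at hv hstrict
  have hnn : ∀ α, 0 ≤ v α := by
    obtain ⟨a, ha⟩ := Finite.exists_min v
    by_contra! hneg
    obtain ⟨b, hb⟩ := hneg
    have hm : v a < 0 := lt_of_le_of_lt (ha b) hb
    have hs : (G.degree a : ℝ) * v a ≤ ∑ β ∈ G.neighborFinset a, v β := by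
      have := Finset.card_nsmul_le_sum (G.neighborFinset a) v (v a) (fun x _ => ha x)
      simpa [nsmul_eq_mul] using this
    have h1 := hv a
    have h2 := mul_le_mul_of_nonneg_left hs ht.le
    have h3 := mul_nonneg (hK a) (neg_nonneg.mpr hm.le)
    have h4 := mul_neg_of_pos_of_neg ht hm
    nlinarith
  have hstep : ∀ α β, G.Adj α β → v α = 0 → v β = 0 := by
    intro α β hab h0
    have h1 := hv α
    rw [h0] at h1
    have h2 : v β ≤ ∑ γ ∈ G.neighborFinset α, v γ :=
      Finset.single_le_sum (fun x _ => hnn x) (by simpa using hab)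
    have h3 : ∑ γ ∈ G.neighborFinset α, v γ ≤ 0 := by
      by_contra! h
      nlinarith [mul_pos ht h]
    exact le_antisymm (h2.trans h3) (hnn β)
  intro α
  refine lt_of_le_of_ne (hnn α) (fun h0 => ?_)
  have hall : ∀ β, v β = 0 := by
    intro β
    obtain ⟨w⟩ := hG.preconnected α β
    have h0' := h0.symm
    clear h0
    induction w with
    | nil => exact h0'
    | cons h _ ih => exact ih (hstep _ _ h h0')
  obtain ⟨β, hβ⟩ := hstrict
  simp [hall] at hβ
end

section
/- The matrix H + K·I is invertible, and every entry of its inverse is strictly positive: ((H + K·I)⁻¹)(α,β) > 0 for all α, β ∈ Ω. (Lemma 2.) -/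
open Matrix Finset

/-- **Lemma 2**: the matrix `H + K·I` is invertible and every entry of its inverse is
strictly positive. -/
theorem mbll_inverse_entrywise_positive
    {Ω : Type*} [Fintype Ω] [DecidableEq Ω] [Nonempty Ω]
    (G : SimpleGraph Ω) [DecidableRel G.Adj] (hG : G.Connected)
    (t : ℝ) (ht : 0 < t) (V : Ω → ℝ) (K : ℝ)
    (H : Matrix Ω Ω ℝ)
    (hH : ∀ α β, H α β = if α = β then V α else if G.Adj α β then -t else 0)
    (hK : ∀ α, 0 ≤ K + V α - t * (G.degree α + 1)) :
    IsUnit (H + K • (1 : Matrix Ω Ω ℝ)) ∧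
      ∀ α β, 0 < (H + K • (1 : Matrix Ω Ω ℝ))⁻¹ α β := by
  have key : ∀ (x : Ω → ℝ) (α : Ω), ((H + K • (1 : Matrix Ω Ω ℝ)) *ᵥ x) α
      = (K + V α) * x α - t * ∑ β ∈ G.neighborFinset α, x β := by
    intro x α
    have h1 : (H + K • (1 : Matrix Ω Ω ℝ)) *ᵥ x = H *ᵥ x + K • x := by
      rw [Matrix.add_mulVec, Matrix.smul_mulVec, Matrix.one_mulVec]
    have h2 : (H *ᵥ x) α = ∑ β, ((if α = β then V α * x β else 0)
        - t * (if G.Adj α β then x β else 0)) := by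
      simp only [Matrix.mulVec, dotProduct]
      refine Finset.sum_congr rfl fun β _ => ?_
      rw [hH]
      by_cases h : α = β
      · subst h
        simp
      · by_cases h' : G.Adj α β <;> simp [h, h']
    have h3 : ∑ β ∈ G.neighborFinset α, x β = ∑ β, if G.Adj α β then x β else 0 := by
      rw [← Finset.sum_filter, SimpleGraph.neighborFinset_eq_filter]
    rw [h1, Pi.add_apply, h2, h3, Finset.sum_sub_distrib, ← Finset.mul_sum]
    simp
    ring
  generalize H + K • (1 : Matrix Ω Ω ℝ) = M at key ⊢
  have minp : ∀ x : Ω → ℝ, (∀ α, 0 ≤ (M *ᵥ x) α) → ∀ α, 0 ≤ x α := by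
    intro x hx
    obtain ⟨a, ha⟩ := Finite.exists_min x
    suffices h : 0 ≤ x a from fun α => h.trans (ha α)
    by_contra! hn
    have h1 := hx a
    rw [key] at h1
    have h2 : (G.degree a : ℝ) * x a ≤ ∑ β ∈ G.neighborFinset a, x β := by
      have := Finset.card_nsmul_le_sum (G.neighborFinset a) x (x a) (fun β _ => ha β)
      simpa using this
    have h3 := mul_le_mul_of_nonneg_left h2 ht.le
    have h4 := mul_nonpos_of_nonneg_of_nonpos (hK a) hn.le
    have h5 := mul_neg_of_pos_of_neg ht hn
    nlinarith
  have hinj : Function.Injective M.mulVec := by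
    intro x y hxy
    have h0 : ∀ x y : Ω → ℝ, M *ᵥ x = M *ᵥ y → ∀ α, y α ≤ x α := by
      intro x y hxy α
      have := minp (x - y) (by intro α; rw [Matrix.mulVec_sub, hxy]; simp) α
      simpa using this
    funext α
    exact le_antisymm (h0 y x hxy.symm α) (h0 x y hxy α)
  have hu : IsUnit M := Matrix.mulVec_injective_iff_isUnit.mp hinj
  refine ⟨hu, fun α β => ?_⟩
  have hdet : IsUnit M.det := (Matrix.isUnit_iff_isUnit_det M).mp hu
  have hMx : M *ᵥ (fun γ => M⁻¹ γ β) = fun γ => (1 : Matrix Ω Ω ℝ) γ β := by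
    funext γ
    rw [← Matrix.mul_nonsing_inv M hdet]
    rfl
  set x : Ω → ℝ := fun γ => M⁻¹ γ β with hxdef
  have hM0 : ∀ γ, 0 ≤ (M *ᵥ x) γ := by
    intro γ
    rw [hMx]
    simp only [Matrix.one_apply]
    split_ifs <;> norm_num
  have hx0 := minp x hM0
  change 0 < x α
  refine lt_of_le_of_ne (hx0 α) fun hα => ?_
  have step : ∀ γ δ, G.Adj γ δ → x γ = 0 → x δ = 0 := by
    intro γ δ hadj h
    have h1 := hM0 γ
    rw [key, h] at h1
    have h2 : x δ ≤ ∑ β ∈ G.neighborFinset γ, x β :=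
      Finset.single_le_sum (fun i _ => hx0 i) (by simpa using hadj)
    have h3 := hx0 δ
    nlinarith
  have all : ∀ δ, x δ = 0 := by
    intro δ
    obtain ⟨w⟩ := hG.preconnected α δ
    have hα' := hα.symm
    clear hα
    induction w with
    | nil => exact hα'
    | cons h p ih => exact ih (step _ _ h hα')
  have hb := congrFun hMx β
  have hz : x = 0 := funext all
  rw [hz] at hb
  simp at hb
end

section
/- Let ψ : Ω → ℝ be a nonzero eigenvector of H with eigenvalue E. Then for every α ∈ Ω, |ψ(α)| ≤ (E + K)·u(α)·max_{β∈Ω} |ψ(β)|. (Theorem 1: the landscape function uniformly bounds every many-body eigenstate.) -/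
open Matrix Finset

theorem mbll_aux_formula {Ω : Type*} [Fintype Ω] [DecidableEq Ω]
    (G : SimpleGraph Ω) [DecidableRel G.Adj] (t : ℝ) (V : Ω → ℝ) (K : ℝ)
    (H : Matrix Ω Ω ℝ)
    (hH : ∀ α β, H α β = if α = β then V α else if G.Adj α β then -t else 0)
    (v : Ω → ℝ) (α : Ω) :
    ((H + K • (1 : Matrix Ω Ω ℝ)) *ᵥ v) α
      = (K + V α) * v α - t * ∑ β ∈ G.neighborFinset α, v β := by
  have h1 : (H *ᵥ v) α = V α * v α - t * ∑ β ∈ G.neighborFinset α, v β := by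
    have h2 : ∀ β, H α β * v β
        = (if α = β then V α * v β else 0) + (if G.Adj α β then -(t * v β) else 0) := by
      intro β
      rw [hH]
      by_cases h : α = β
      · subst h; simp
      · by_cases h' : G.Adj α β <;> simp [h, h']
    simp only [Matrix.mulVec, dotProduct, h2, Finset.sum_add_distrib]
    rw [← Finset.sum_filter (fun β => G.Adj α β), ← SimpleGraph.neighborFinset_eq_filter]
    simp [Finset.mul_sum, sub_eq_add_neg]
  rw [Matrix.add_mulVec, Matrix.smul_mulVec, Matrix.one_mulVec]
  simp only [Pi.add_apply, Pi.smul_apply, smul_eq_mul, h1]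
  ring

theorem mbll_aux_min {Ω : Type*} [Fintype Ω] [DecidableEq Ω]
    (G : SimpleGraph Ω) [DecidableRel G.Adj] (t : ℝ) (ht : 0 < t) (V : Ω → ℝ) (K : ℝ)
    (H : Matrix Ω Ω ℝ)
    (hH : ∀ α β, H α β = if α = β then V α else if G.Adj α β then -t else 0)
    (hK : ∀ α, 0 ≤ K + V α - t * (G.degree α + 1))
    (v : Ω → ℝ) (α : Ω) (hmin : ∀ β, v α ≤ v β) (hneg : v α < 0) :
    ((H + K • (1 : Matrix Ω Ω ℝ)) *ᵥ v) α < 0 := by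
  rw [mbll_aux_formula G t V K H hH]
  have h1 : (G.degree α : ℝ) * v α ≤ ∑ β ∈ G.neighborFinset α, v β := by
    have := Finset.card_nsmul_le_sum (G.neighborFinset α) v (v α) (fun β _ => hmin β)
    simpa [nsmul_eq_mul] using this
  have h2 := mul_le_mul_of_nonneg_left h1 ht.le
  have h3 := mul_nonneg (hK α) (neg_nonneg.mpr hneg.le)
  have h4 := mul_pos ht (neg_pos.mpr hneg)
  linarith

/-- **Theorem 1**: the many-body localization landscape `u = (H + K·I)⁻¹ 𝟙` uniformly
bounds every many-body eigenstate: `|ψ α| ≤ (E + K) · u α · max_β |ψ β|`. -/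
theorem mbll_landscape_bound
    {Ω : Type*} [Fintype Ω] [DecidableEq Ω] [Nonempty Ω]
    (G : SimpleGraph Ω) [DecidableRel G.Adj] (hG : G.Connected)
    (t : ℝ) (ht : 0 < t) (V : Ω → ℝ) (K : ℝ)
    (H : Matrix Ω Ω ℝ)
    (hH : ∀ α β, H α β = if α = β then V α else if G.Adj α β then -t else 0)
    (hK : ∀ α, 0 ≤ K + V α - t * (G.degree α + 1))
    (u : Ω → ℝ) (hu : u = (H + K • (1 : Matrix Ω Ω ℝ))⁻¹ *ᵥ (fun _ => 1))
    (hupos : ∀ α, 0 < u α)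
    (ψ : Ω → ℝ) (hψ0 : ψ ≠ 0) (E : ℝ) (hψ : H *ᵥ ψ = E • ψ) :
    ∀ α, |ψ α| ≤ (E + K) * u α * (Finset.univ.sup' Finset.univ_nonempty fun β => |ψ β|) := by
  have hform := mbll_aux_min G t ht V K H hH hK
  set A : Matrix Ω Ω ℝ := H + K • (1 : Matrix Ω Ω ℝ) with hA
  have hunit : IsUnit A.det := by
    by_contra h
    obtain ⟨a⟩ := ‹Nonempty Ω›
    have := hupos a
    rw [hu, Matrix.nonsing_inv_apply_not_isUnit A h] at this
    simp at this
  have hAu : A *ᵥ u = fun _ => 1 := by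
    rw [hu, Matrix.mulVec_mulVec, Matrix.mul_nonsing_inv A hunit, Matrix.one_mulVec]
  have hAψ : A *ᵥ ψ = (E + K) • ψ := by
    rw [hA, Matrix.add_mulVec, Matrix.smul_mulVec, Matrix.one_mulVec, hψ, add_smul]
  have hpos : ∀ v : Ω → ℝ, (∀ β, 0 ≤ (A *ᵥ v) β) → ∀ β, 0 ≤ v β := by
    intro v hv β
    obtain ⟨a, ha⟩ := Finite.exists_min v
    by_contra hb
    have h1 := hform v a ha (lt_of_le_of_lt (ha β) (not_le.mp hb))
    exact absurd (hv a) (not_le.mpr h1)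
  have hmax : ∀ β, |ψ β| ≤ Finset.univ.sup' Finset.univ_nonempty fun β => |ψ β| :=
    fun β => Finset.le_sup' (fun β => |ψ β|) (Finset.mem_univ β)
  set M := Finset.univ.sup' Finset.univ_nonempty fun β => |ψ β|
  have hEK : 0 ≤ E + K := by
    obtain ⟨a, ha⟩ := Finite.exists_max (fun β => |ψ β|)
    obtain ⟨b, hb⟩ := Function.ne_iff.mp hψ0
    have hapos : 0 < |ψ a| := lt_of_lt_of_le (abs_pos.mpr hb) (ha b)
    rcases abs_cases (ψ a) with ⟨h, _⟩ | ⟨h, _⟩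
    · have h1 := hform (-ψ) a (fun c => by
        have := ha c
        have := le_abs_self (ψ c)
        simp only [Pi.neg_apply]; linarith) (by simp only [Pi.neg_apply]; linarith)
      rw [Matrix.mulVec_neg, hAψ] at h1
      simp only [Pi.neg_apply, Pi.smul_apply, smul_eq_mul] at h1
      by_contra hc
      nlinarith
    · have h1 := hform ψ a (fun c => by
        have := ha c
        have := neg_abs_le (ψ c)
        linarith) (by linarith)
      rw [hAψ] at h1
      simp only [Pi.smul_apply, smul_eq_mul] at h1
      by_contra hc
      nlinarith
  intro α
  have hp := hpos (((E + K) * M) • u + ψ) (fun β => by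
    rw [Matrix.mulVec_add, Matrix.mulVec_smul, hAu, hAψ]
    simp only [Pi.add_apply, Pi.smul_apply, smul_eq_mul, mul_one]
    rw [← mul_add]
    exact mul_nonneg hEK (by linarith [hmax β, neg_abs_le (ψ β)])) α
  have hm := hpos (((E + K) * M) • u - ψ) (fun β => by
    rw [Matrix.mulVec_sub, Matrix.mulVec_smul, hAu, hAψ]
    simp only [Pi.sub_apply, Pi.smul_apply, smul_eq_mul, mul_one]
    rw [← mul_sub]
    exact mul_nonneg hEK (by linarith [hmax β, le_abs_self (ψ β)])) α
  simp only [Pi.add_apply, Pi.sub_apply, Pi.smul_apply, smul_eq_mul] at hp hm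
  rw [abs_le]
  constructor <;> linarith
end

section
/- Let ψ : Ω → ℝ be an eigenvector of H with eigenvalue E and set E' := E + K. Then for every α ∈ Ω, −t·Σ_{β adjacent to α} u(α)·u(β)·(ψ(β)/u(β) − ψ(α)/u(α)) + ψ(α) = E'·u(α)·ψ(α). (The eigenvalue equation rewritten in landscape form: a weighted graph Laplacian with weights u(α)u(β) acting on ψ/u, with effective potential 1/u.) -/
open Matrix Finset

/-- The eigenvalue equation rewritten in landscape form: a weighted graph Laplacian with
edge weights `u α · u β` acting on `ψ/u`, with effective potential `1/u`:
`−t·Σ_{β ~ α} u α · u β · (ψ β / u β − ψ α / u α) + ψ α = E'· u α · ψ α` with `E' = E + K`. -/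
theorem mbll_landscape_schroedinger_form
    {Ω : Type*} [Fintype Ω] [DecidableEq Ω] [Nonempty Ω]
    (G : SimpleGraph Ω) [DecidableRel G.Adj] (hG : G.Connected)
    (t : ℝ) (ht : 0 < t) (V : Ω → ℝ) (K : ℝ)
    (H : Matrix Ω Ω ℝ)
    (hH : ∀ α β, H α β = if α = β then V α else if G.Adj α β then -t else 0)
    (hK : ∀ α, 0 ≤ K + V α - t * (G.degree α + 1))
    (u : Ω → ℝ) (hu : u = (H + K • (1 : Matrix Ω Ω ℝ))⁻¹ *ᵥ (fun _ => 1))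
    (hupos : ∀ α, 0 < u α)
    (ψ : Ω → ℝ) (E : ℝ) (hψ : H *ᵥ ψ = E • ψ)
    (E' : ℝ) (hE' : E' = E + K) :
    ∀ α, -t * ∑ β ∈ G.neighborFinset α, u α * u β * (ψ β / u β - ψ α / u α) + ψ α
      = E' * u α * ψ α := by
  have key : ∀ (f : Ω → ℝ) (α : Ω),
      (H *ᵥ f) α = V α * f α - t * ∑ β ∈ G.neighborFinset α, f β := by
    intro f α
    have h1 : ∀ β, H α β * f β
        = (if α = β then V α * f β else 0) - (if G.Adj α β then t * f β else 0) := by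
      intro β
      rw [hH]
      by_cases h : α = β
      · subst h; simp
      · by_cases h' : G.Adj α β <;> simp [h, h']
    simp only [Matrix.mulVec, dotProduct, h1, Finset.sum_sub_distrib]
    rw [Finset.sum_ite_eq, Finset.mul_sum, SimpleGraph.neighborFinset_eq_filter,
      Finset.sum_filter]
    simp
  have hdet : IsUnit (H + K • (1 : Matrix Ω Ω ℝ)).det := by
    by_contra h
    rw [Matrix.nonsing_inv_apply_not_isUnit _ h] at hu
    have := hupos (Classical.arbitrary Ω)
    rw [hu] at this
    simp at this
  have hAu : (H + K • (1 : Matrix Ω Ω ℝ)) *ᵥ u = fun _ => 1 := by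
    rw [hu, Matrix.mulVec_mulVec, Matrix.mul_nonsing_inv _ hdet, Matrix.one_mulVec]
  intro α
  have e1 := congrFun hAu α
  have e2 := congrFun hψ α
  rw [Matrix.add_mulVec, Matrix.smul_mulVec, Matrix.one_mulVec] at e1
  simp only [Pi.add_apply, Pi.smul_apply, smul_eq_mul, key] at e1 e2
  have e3 : ∑ β ∈ G.neighborFinset α, u α * u β * (ψ β / u β - ψ α / u α)
      = u α * ∑ β ∈ G.neighborFinset α, ψ β - ψ α * ∑ β ∈ G.neighborFinset α, u β := by
    rw [Finset.mul_sum, Finset.mul_sum, ← Finset.sum_sub_distrib]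
    refine Finset.sum_congr rfl fun β _ => ?_
    have := (hupos α).ne'
    have := (hupos β).ne'
    field_simp
  rw [e3, hE']
  linear_combination u α * e2 - ψ α * e1
end

section
/- Let ψ : Ω → ℝ be an eigenvector of H with eigenvalue E and set E' := E + K. Then t·Σ_{{α,β} edge of G} u(α)·u(β)·(ψ(α)/u(α) − ψ(β)/u(β))² + Σ_{α∈Ω} ψ(α)²/u(α) = E'·Σ_{α∈Ω} ψ(α)², where the first sum runs over the unordered edges of G, each counted once. (The quadratic-form identity exhibiting 1/u as an effective confining potential.) -/
open Matrix Finset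

theorem two_edge_sum {Ω : Type*} [Fintype Ω] [DecidableEq Ω]
    (G : SimpleGraph Ω) [DecidableRel G.Adj] (F : Sym2 Ω → ℝ) :
    ∑ α, ∑ β, (if G.Adj α β then F s(α, β) else 0) = 2 * ∑ e ∈ G.edgeFinset, F e := by
  rw [← Finset.sum_product', ← Finset.sum_filter (s := Finset.univ ×ˢ Finset.univ)
    (p := fun x : Ω × Ω => G.Adj x.1 x.2) (f := fun x => F s(x.1, x.2))]
  rw [← Finset.sum_fiberwise_of_maps_to (t := G.edgeFinset) (g := fun x : Ω × Ω => s(x.1, x.2))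
    (by intro x hx; simpa using hx), Finset.mul_sum]
  refine Finset.sum_congr rfl ?_
  intro e he
  induction e using Sym2.ind with
  | _ a b =>
    have hab : G.Adj a b := by simpa using he
    have hs : (Finset.filter (fun x : Ω × Ω => s(x.1, x.2) = s(a, b))
        (Finset.filter (fun x : Ω × Ω => G.Adj x.1 x.2) (Finset.univ ×ˢ Finset.univ)))
        = {(a, b), (b, a)} := by
      ext ⟨x, y⟩
      simp only [Finset.mem_filter, Finset.mem_product, Finset.mem_univ, true_and,
        Finset.mem_insert, Finset.mem_singleton, Prod.mk.injEq, Sym2.eq_iff]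
      constructor
      · exact fun h => h.2
      · rintro (⟨rfl, rfl⟩ | ⟨rfl, rfl⟩)
        · exact ⟨hab, Or.inl ⟨rfl, rfl⟩⟩
        · exact ⟨hab.symm, Or.inr ⟨rfl, rfl⟩⟩
    rw [hs, Finset.sum_pair (by intro h; exact hab.ne (Prod.mk.inj h).1), Sym2.eq_swap (a := b)]
    ring

/-- The quadratic-form identity exhibiting `1/u` as an effective confining potential:
`t·Σ_{edges {α,β}} u α · u β · (ψ α/u α − ψ β/u β)² + Σ_α ψ α²/u α = E'·Σ_α ψ α²`,
the edge sum running over the unordered edges of `G`, each counted once. -/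
theorem mbll_quadratic_form_identity
    {Ω : Type*} [Fintype Ω] [DecidableEq Ω] [Nonempty Ω]
    (G : SimpleGraph Ω) [DecidableRel G.Adj] (hG : G.Connected)
    (t : ℝ) (ht : 0 < t) (V : Ω → ℝ) (K : ℝ)
    (H : Matrix Ω Ω ℝ)
    (hH : ∀ α β, H α β = if α = β then V α else if G.Adj α β then -t else 0)
    (hK : ∀ α, 0 ≤ K + V α - t * (G.degree α + 1))
    (u : Ω → ℝ) (hu : u = (H + K • (1 : Matrix Ω Ω ℝ))⁻¹ *ᵥ (fun _ => 1))
    (hupos : ∀ α, 0 < u α)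
    (ψ : Ω → ℝ) (E : ℝ) (hψ : H *ᵥ ψ = E • ψ)
    (E' : ℝ) (hE' : E' = E + K) :
    t * ∑ e ∈ G.edgeFinset,
        Sym2.lift ⟨fun α β => u α * u β * (ψ α / u α - ψ β / u β) ^ 2,
          fun α β => by ring⟩ e
      + ∑ α, ψ α ^ 2 / u α = E' * ∑ α, ψ α ^ 2 := by
  have hdet : IsUnit (H + K • (1 : Matrix Ω Ω ℝ)).det := by
    by_contra h
    rw [Matrix.nonsing_inv_apply_not_isUnit _ h, Matrix.zero_mulVec] at hu
    obtain ⟨a⟩ := ‹Nonempty Ω›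
    have := hupos a
    rw [hu] at this
    simp at this
  have hAu : (H + K • (1 : Matrix Ω Ω ℝ)) *ᵥ u = fun _ => 1 := by
    rw [hu, Matrix.mulVec_mulVec, Matrix.mul_nonsing_inv _ hdet, Matrix.one_mulVec]
  have hHv : ∀ (v : Ω → ℝ) α,
      (H *ᵥ v) α = V α * v α - t * ∑ β, (if G.Adj α β then v β else 0) := by
    intro v α
    have h1 : ∀ β, H α β * v β = (if α = β then V α * v β else 0)
        - t * (if G.Adj α β then v β else 0) := by
      intro β
      rw [hH]
      by_cases h : α = β
      · subst h; simp
      · by_cases h' : G.Adj α β <;> simp [h, h']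
    simp only [Matrix.mulVec, dotProduct, h1, Finset.sum_sub_distrib, Finset.mul_sum]
    simp
  have h1 : ∀ α, t * ∑ β, (if G.Adj α β then u β else 0) = (V α + K) * u α - 1 := by
    intro α
    have := congrFun hAu α
    rw [Matrix.add_mulVec, Matrix.smul_mulVec, Matrix.one_mulVec, Pi.add_apply, hHv] at this
    simp only [Pi.smul_apply, smul_eq_mul] at this
    linarith
  have h2 : ∀ α, t * ∑ β, (if G.Adj α β then ψ β else 0) = (V α - E) * ψ α := by
    intro α
    have := congrFun hψ α
    rw [hHv] at this
    simp only [Pi.smul_apply, smul_eq_mul] at this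
    linarith
  have h3 := two_edge_sum G (Sym2.lift ⟨fun α β => u α * u β * (ψ α / u α - ψ β / u β) ^ 2,
          fun α β => by ring⟩)
  have h4 : ∀ α β, (if G.Adj α β then (Sym2.lift
      ⟨fun α β => u α * u β * (ψ α / u α - ψ β / u β) ^ 2, fun α β => by ring⟩ :
        Sym2 Ω → ℝ) s(α, β) else 0)
      = ψ α ^ 2 / u α * (if G.Adj α β then u β else 0)
        + ψ β ^ 2 / u β * (if G.Adj β α then u α else 0)
        - 2 * (ψ α * (if G.Adj α β then ψ β else 0)) := by
    intro α β
    have ha := (hupos α).ne'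
    have hb := (hupos β).ne'
    by_cases h : G.Adj α β
    · simp only [h, h.symm, if_true, Sym2.lift_mk]
      field_simp
      ring
    · have h' : ¬ G.Adj β α := fun h' => h h'.symm
      simp [h, h']
  simp only [h4, Finset.sum_add_distrib, Finset.sum_sub_distrib] at h3
  rw [Finset.sum_comm (f := fun α β => ψ β ^ 2 / u β * (if G.Adj β α then u α else 0))] at h3
  simp only [← Finset.mul_sum] at h3
  have h5 : t * ∑ α, ψ α ^ 2 / u α * ∑ β, (if G.Adj α β then u β else 0)
      - t * ∑ α, ψ α * ∑ β, (if G.Adj α β then ψ β else 0)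
      = E' * ∑ α, ψ α ^ 2 - ∑ α, ψ α ^ 2 / u α := by
    rw [Finset.mul_sum, Finset.mul_sum, Finset.mul_sum]
    simp only [mul_left_comm t, h1, h2]
    rw [← Finset.sum_sub_distrib, ← Finset.sum_sub_distrib]
    refine Finset.sum_congr rfl fun α _ => ?_
    have ha := (hupos α).ne'
    rw [hE']
    field_simp
    ring
  linear_combination h5 - t / 2 * h3
end

section
/- Let ψ : Ω → ℝ be an eigenvector of H with eigenvalue E and set E' := E + K. Then there exists α ∈ Ω with 1/u(α) ≤ E'; equivalently, E' ≥ min_{α∈Ω} 1/u(α). (The classically allowed region of the effective potential 1/u at energy E' is nonempty.) -/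
open Matrix Finset

/-- The classically allowed region of the effective potential `1/u` at energy `E' = E + K`
is nonempty: every eigenvalue satisfies `E' ≥ min_α 1/u α`, i.e. there exists `α` with
`1/u α ≤ E'`. -/
theorem mbll_classically_allowed_nonempty
    {Ω : Type*} [Fintype Ω] [DecidableEq Ω] [Nonempty Ω]
    (G : SimpleGraph Ω) [DecidableRel G.Adj] (hG : G.Connected)
    (t : ℝ) (ht : 0 < t) (V : Ω → ℝ) (K : ℝ)
    (H : Matrix Ω Ω ℝ)
    (hH : ∀ α β, H α β = if α = β then V α else if G.Adj α β then -t else 0)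
    (hK : ∀ α, 0 ≤ K + V α - t * (G.degree α + 1))
    (u : Ω → ℝ) (hu : u = (H + K • (1 : Matrix Ω Ω ℝ))⁻¹ *ᵥ (fun _ => 1))
    (hupos : ∀ α, 0 < u α)
    (ψ : Ω → ℝ) (hψ0 : ψ ≠ 0) (E : ℝ) (hψ : H *ᵥ ψ = E • ψ)
    (E' : ℝ) (hE' : E' = E + K) :
    ∃ α, 1 / u α ≤ E' := by
  have hdet : IsUnit (H + K • (1 : Matrix Ω Ω ℝ)).det := by
    by_contra h
    obtain ⟨a⟩ := ‹Nonempty Ω›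
    have h1 := hupos a
    rw [hu, Matrix.nonsing_inv_apply_not_isUnit _ h] at h1
    simp at h1
  have hAu : (H + K • (1 : Matrix Ω Ω ℝ)) *ᵥ u = fun _ => 1 := by
    rw [hu, Matrix.mulVec_mulVec, Matrix.mul_nonsing_inv _ hdet, Matrix.one_mulVec]
  have key : ∀ (x : Ω → ℝ) (a : Ω),
      (H *ᵥ x) a = V a * x a - t * ∑ b, (if G.Adj a b then x b else 0) := by
    intro x a
    have h1 : ∀ b, H a b * x b =
        (if a = b then V a * x b else 0) - t * (if G.Adj a b then x b else 0) := by
      intro b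
      rw [hH]
      by_cases h : a = b
      · subst h; simp
      · by_cases h2 : G.Adj a b <;> simp [h, h2]
    simp only [Matrix.mulVec, dotProduct, h1]
    rw [Finset.sum_sub_distrib, Finset.mul_sum]
    simp
  obtain ⟨a, -, ha⟩ := Finset.exists_max_image (Finset.univ : Finset Ω)
    (fun b => |ψ b| / u b) Finset.univ_nonempty
  refine ⟨a, ?_⟩
  obtain ⟨c, hc⟩ := Function.ne_iff.mp hψ0
  obtain ⟨M, hM⟩ : ∃ M, M = |ψ a| / u a := ⟨_, rfl⟩
  have hMpos : 0 < M := by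
    have h1 : 0 < |ψ c| / u c := div_pos (abs_pos.mpr hc) (hupos c)
    have h2 := ha c (Finset.mem_univ c)
    linarith
  have hle : ∀ b, |ψ b| ≤ M * u b := by
    intro b
    have h2 := ha b (Finset.mem_univ b)
    rw [← hM] at h2
    exact (div_le_iff₀ (hupos b)).mp h2
  have hMa : |ψ a| = M * u a := by
    rw [hM, div_mul_cancel₀ _ (hupos a).ne']
  have e1 : V a * ψ a - t * ∑ b, (if G.Adj a b then ψ b else 0) = E * ψ a := by
    rw [← key, hψ]; simp
  have e2 : V a * u a - t * ∑ b, (if G.Adj a b then u b else 0) + K * u a = 1 := by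
    rw [← key]
    have := congrFun hAu a
    simpa [Matrix.add_mulVec, Matrix.smul_mulVec] using this
  have hS : |∑ b, (if G.Adj a b then ψ b else 0)| ≤
      M * ∑ b, (if G.Adj a b then u b else 0) := by
    refine (Finset.abs_sum_le_sum_abs _ _).trans ?_
    rw [Finset.mul_sum]
    refine Finset.sum_le_sum fun b _ => ?_
    split_ifs
    · exact hle b
    · simp
  have h3 : (V a - E) * |ψ a| ≤ t * (M * ∑ b, (if G.Adj a b then u b else 0)) := by
    calc (V a - E) * |ψ a| ≤ |(V a - E) * ψ a| := by
          rw [abs_mul]; exact mul_le_mul_of_nonneg_right (le_abs_self _) (abs_nonneg _)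
      _ = |t * ∑ b, (if G.Adj a b then ψ b else 0)| := by congr 1; linarith
      _ = t * |∑ b, (if G.Adj a b then ψ b else 0)| := by rw [abs_mul, abs_of_pos ht]
      _ ≤ _ := mul_le_mul_of_nonneg_left hS ht.le
  rw [hMa] at h3
  rw [div_le_iff₀ (hupos a), hE']
  generalize (∑ b, (if G.Adj a b then u b else 0)) = S at *
  have h4 : M * ((V a - E) * u a) ≤ M * (t * S) := by linarith
  have h5 := le_of_mul_le_mul_left h4 hMpos
  linarith
end

section
/- Let ψ : Ω → ℝ be an eigenvector of H with eigenvalue E and set E' := E + K. Then for every function S : Ω → ℝ, Σ_{α∈Ω} ψ(α)²·e^{2S(α)}·[ 1/u(α) − E' − (t/2)·Σ_{β adjacent to α} (e^{S(β)−S(α)} − 1)² ] ≤ 0. (Lemma IV.1: the discrete Agmon inequality on the Fock-space graph, valid for an arbitrary weight function S.) -/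
open Matrix Finset

/-- **Lemma IV.1 (discrete Agmon inequality)**: for every weight function `S : Ω → ℝ`,
`Σ_α ψ α² e^{2S α} [1/u α − E' − (t/2)·Σ_{β ~ α} (e^{S β − S α} − 1)²] ≤ 0`. -/
theorem mbll_agmon_inequality
    {Ω : Type*} [Fintype Ω] [DecidableEq Ω] [Nonempty Ω]
    (G : SimpleGraph Ω) [DecidableRel G.Adj] (hG : G.Connected)
    (t : ℝ) (ht : 0 < t) (V : Ω → ℝ) (K : ℝ)
    (H : Matrix Ω Ω ℝ)
    (hH : ∀ α β, H α β = if α = β then V α else if G.Adj α β then -t else 0)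
    (hK : ∀ α, 0 ≤ K + V α - t * (G.degree α + 1))
    (u : Ω → ℝ) (hu : u = (H + K • (1 : Matrix Ω Ω ℝ))⁻¹ *ᵥ (fun _ => 1))
    (hupos : ∀ α, 0 < u α)
    (ψ : Ω → ℝ) (E : ℝ) (hψ : H *ᵥ ψ = E • ψ)
    (E' : ℝ) (hE' : E' = E + K) :
    ∀ S : Ω → ℝ,
      ∑ α, ψ α ^ 2 * Real.exp (2 * S α) *
        (1 / u α - E' - t / 2 * ∑ β ∈ G.neighborFinset α, (Real.exp (S β - S α) - 1) ^ 2)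
      ≤ 0 := by
  intro S
  set A : Matrix Ω Ω ℝ := H + K • (1 : Matrix Ω Ω ℝ) with hA
  have hdet : IsUnit A.det := by
    by_contra h
    obtain ⟨x⟩ := ‹Nonempty Ω›
    have h1 := hupos x
    rw [hu, Matrix.nonsing_inv_apply_not_isUnit _ h] at h1
    simp at h1
  have hAu : A *ᵥ u = fun _ => 1 := by
    rw [hu, Matrix.mulVec_mulVec, Matrix.mul_nonsing_inv _ hdet, Matrix.one_mulVec]
  have hmul : ∀ (f : Ω → ℝ) (α : Ω), (H *ᵥ f) α
      = V α * f α - ∑ β ∈ G.neighborFinset α, t * f β := by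
    intro f α
    have h1 : ∀ β, H α β * f β = (if α = β then V α * f β else 0)
        - (if G.Adj α β then t * f β else 0) := by
      intro β
      rw [hH]
      by_cases h : α = β
      · subst h; simp
      · by_cases h2 : G.Adj α β <;> simp [h, h2]
    simp only [Matrix.mulVec, dotProduct, h1, Finset.sum_sub_distrib]
    rw [Finset.sum_ite_eq, ← Finset.sum_filter, SimpleGraph.neighborFinset_eq_filter]
    simp
  have eu : ∀ α, (V α + K) * u α - ∑ β ∈ G.neighborFinset α, t * u β = 1 := by
    intro α
    have h := congrFun hAu α
    rw [hA, Matrix.add_mulVec, Pi.add_apply, hmul, Matrix.smul_mulVec, Matrix.one_mulVec] at h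
    simp only [Pi.smul_apply, smul_eq_mul] at h
    linarith
  have ep : ∀ α, V α * ψ α - ∑ β ∈ G.neighborFinset α, t * ψ β = E * ψ α := by
    intro α
    have h := congrFun hψ α
    rw [hmul] at h
    simpa using h
  set e : Ω → ℝ := fun α => Real.exp (S α) with he
  have hepos : ∀ α, 0 < e α := fun α => Real.exp_pos _
  let F : Ω → Ω → ℝ := fun α β => t * (e α ^ 2 * ψ α * ψ β - e α ^ 2 * ψ α ^ 2 * (u β / u α)
    - 1 / 2 * ψ α ^ 2 * (e β - e α) ^ 2)
  have hterm : ∀ α, ψ α ^ 2 * Real.exp (2 * S α) *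
        (1 / u α - E' - t / 2 * ∑ β ∈ G.neighborFinset α, (Real.exp (S β - S α) - 1) ^ 2)
      = ∑ β, if G.Adj α β then F α β else 0 := by
    intro α
    have hu0 := (hupos α).ne'
    have he0 := (hepos α).ne'
    have h2 : Real.exp (2 * S α) = e α ^ 2 := by
      rw [he, ← Real.exp_nat_mul]; norm_num
    have h3 : ∀ β, (Real.exp (S β - S α) - 1) ^ 2 = (e β - e α) ^ 2 * (1 / e α ^ 2) := by
      intro β
      rw [Real.exp_sub]
      change (e β / e α - 1) ^ 2 = _
      field_simp
    have h4 : ∑ β, (if G.Adj α β then F α β else 0) = ∑ β ∈ G.neighborFinset α, F α β := by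
      rw [← Finset.sum_filter, SimpleGraph.neighborFinset_eq_filter]
    have h5 : ∑ β ∈ G.neighborFinset α, F α β
        = e α ^ 2 * ψ α * (∑ β ∈ G.neighborFinset α, t * ψ β)
        - e α ^ 2 * ψ α ^ 2 / u α * (∑ β ∈ G.neighborFinset α, t * u β)
        - t / 2 * ψ α ^ 2 * ∑ β ∈ G.neighborFinset α, (e β - e α) ^ 2 := by
      simp only [Finset.mul_sum, ← Finset.sum_sub_distrib]
      refine Finset.sum_congr rfl fun β _ => ?_
      simp only [F]
      ring
    have h6 := eu α
    have h7 := ep α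
    rw [h4, h5, h2]
    simp only [h3]
    rw [← Finset.sum_mul, hE']
    have h8 : ∑ β ∈ G.neighborFinset α, t * u β = (V α + K) * u α - 1 := by linarith
    have h9 : ∑ β ∈ G.neighborFinset α, t * ψ β = V α * ψ α - E * ψ α := by linarith
    rw [h8, h9]
    field_simp
    ring
  rw [Finset.sum_congr rfl fun α _ => hterm α]
  have hsym : ∀ α β, F α β + F β α ≤ 0 := by
    intro α β
    have ha := hupos α
    have hb := hupos β
    have k1 : 2 * (e α * ψ α) * (e β * ψ β) ≤ e α ^ 2 * ψ α ^ 2 * (u β / u α)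
        + e β ^ 2 * ψ β ^ 2 * (u α / u β) := by
      have : e α ^ 2 * ψ α ^ 2 * (u β / u α) + e β ^ 2 * ψ β ^ 2 * (u α / u β)
          - 2 * (e α * ψ α) * (e β * ψ β)
          = (e α * ψ α * u β - e β * ψ β * u α) ^ 2 / (u α * u β) := by
        field_simp
        ring
      have h0 : 0 ≤ (e α * ψ α * u β - e β * ψ β * u α) ^ 2 / (u α * u β) := by positivity
      linarith
    have k2 : 0 ≤ (ψ α - ψ β) ^ 2 * (e β - e α) ^ 2 := by positivity
    have : F α β + F β α = t * ((e α ^ 2 + e β ^ 2) * (ψ α * ψ β)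
      - (e α ^ 2 * ψ α ^ 2 * (u β / u α) + e β ^ 2 * ψ β ^ 2 * (u α / u β))
      - 1 / 2 * (ψ α ^ 2 + ψ β ^ 2) * (e β - e α) ^ 2) := by
      simp only [F]; ring
    rw [this]
    refine mul_nonpos_of_nonneg_of_nonpos ht.le ?_
    nlinarith
  have hc : ∑ α, ∑ β, (if G.Adj α β then F α β else 0)
      = ∑ α, ∑ β, (if G.Adj α β then F β α else 0) := by
    rw [Finset.sum_comm]
    simp only [G.adj_comm]
  have hs : ∑ α, ∑ β, (if G.Adj α β then F α β else 0)
      + ∑ α, ∑ β, (if G.Adj α β then F β α else 0) ≤ 0 := by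
    simp only [← Finset.sum_add_distrib]
    refine Finset.sum_nonpos fun α _ => Finset.sum_nonpos fun β _ => ?_
    split_ifs
    · exact hsym α β
    · simp
  linarith
end

section
/- Let ψ : Ω → ℝ be an eigenvector of H with eigenvalue E and set E' := E + K. Assume the classically allowed region Ū := {α ∈ Ω : 1/u(α) − E' < 0} is nonempty, and fix ε ∈ (0,1). With the Agmon edge weights w and Agmon action S defined from ε, u, E' as in the context, the following refined inequality holds: Σ_{α∈Ω} ψ(α)²·e^{2S(α)}·(1/u(α) − E') ≤ (1−ε)·Σ_{α∈Ω} ψ(α)²·e^{2S(α)}·max(1/u(α) − E', 0). (Lemma IV.2.) -/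
open Matrix Finset

lemma quad_id {Ω : Type*} [Fintype Ω] (M : Matrix Ω Ω ℝ) (hM : ∀ a b, M a b = M b a)
    (h v : Ω → ℝ) :
    ∑ a, ∑ b, M a b * (h a * v a) * (h b * v b)
      = ∑ a, h a ^ 2 * v a * (M *ᵥ v) a
        - (1 / 2) * ∑ a, ∑ b, M a b * (h a - h b) ^ 2 * (v a * v b) := by
  have e1 : ∑ a, h a ^ 2 * v a * (M *ᵥ v) a = ∑ a, ∑ b, h a ^ 2 * v a * (M a b * v b) := by
    refine Finset.sum_congr rfl fun a _ => ?_
    simp only [Matrix.mulVec, dotProduct, Finset.mul_sum]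
  have e2 : ∑ a, ∑ b, h a ^ 2 * v a * (M a b * v b)
      = ∑ a, ∑ b, h b ^ 2 * v b * (M a b * v a) := by
    rw [Finset.sum_comm]
    refine Finset.sum_congr rfl fun a _ => Finset.sum_congr rfl fun b _ => ?_
    rw [hM]
  have e3 : ∑ a, ∑ b, M a b * (h a - h b) ^ 2 * (v a * v b)
      = ∑ a, ∑ b, h a ^ 2 * v a * (M a b * v b) + ∑ a, ∑ b, h b ^ 2 * v b * (M a b * v a)
        - 2 * ∑ a, ∑ b, M a b * (h a * v a) * (h b * v b) := by
    simp only [Finset.mul_sum, ← Finset.sum_add_distrib, ← Finset.sum_sub_distrib]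
    refine Finset.sum_congr rfl fun a _ => Finset.sum_congr rfl fun b _ => ?_
    ring
  rw [e1, e3, ← e2]; ring

lemma exp_diff_sq {a b w s : ℝ} (hab : b ≤ a + w) (hba : a ≤ b + w)
    (hs : 0 ≤ s) (hw : w ≤ Real.log (1 + s)) :
    (Real.exp a - Real.exp b) ^ 2 ≤ Real.exp a ^ 2 * s ^ 2 := by
  wlog hle : a ≤ b generalizing a b
  · have h1 := this hba hab (le_of_not_ge hle)
    have h2 : Real.exp b ≤ Real.exp a := Real.exp_le_exp.2 (le_of_not_ge hle)
    have h3 : Real.exp b ^ 2 ≤ Real.exp a ^ 2 := by gcongr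
    nlinarith [mul_le_mul_of_nonneg_right h3 (sq_nonneg s)]
  · have h1 : Real.exp b ≤ Real.exp a * (1 + s) := by
      calc Real.exp b ≤ Real.exp (a + Real.log (1 + s)) := Real.exp_le_exp.2 (by linarith)
        _ = _ := by rw [Real.exp_add, Real.exp_log (by linarith)]
    have h2 : Real.exp a ≤ Real.exp b := Real.exp_le_exp.2 hle
    rw [← mul_pow, ← neg_sub, neg_sq]
    exact pow_le_pow_left₀ (by linarith) (by linarith) 2

/-- **Lemma IV.2**: with the Agmon edge weights `w` and Agmon action `S` built from
`ε ∈ (0,1)`, the landscape `u` and the shifted energy `E' = E + K`, every eigenstate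
satisfies the refined inequality
`Σ_α ψ α² e^{2S α} (1/u α − E') ≤ (1−ε)·Σ_α ψ α² e^{2S α} max(1/u α − E', 0)`. -/
theorem mbll_agmon_refined_inequality
    {Ω : Type*} [Fintype Ω] [DecidableEq Ω] [Nonempty Ω]
    (G : SimpleGraph Ω) [DecidableRel G.Adj] (hG : G.Connected)
    (t : ℝ) (ht : 0 < t) (V : Ω → ℝ) (K : ℝ)
    (H : Matrix Ω Ω ℝ)
    (hH : ∀ α β, H α β = if α = β then V α else if G.Adj α β then -t else 0)
    (hK : ∀ α, 0 ≤ K + V α - t * (G.degree α + 1))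
    (u : Ω → ℝ) (hu : u = (H + K • (1 : Matrix Ω Ω ℝ))⁻¹ *ᵥ (fun _ => 1))
    (hupos : ∀ α, 0 < u α)
    (ψ : Ω → ℝ) (E : ℝ) (hψ : H *ᵥ ψ = E • ψ)
    (E' : ℝ) (hE' : E' = E + K)
    (Ubar : Finset Ω) (hUbar : ∀ α, α ∈ Ubar ↔ 1 / u α - E' < 0) (hUne : Ubar.Nonempty)
    (ε : ℝ) (hε0 : 0 < ε) (hε1 : ε < 1)
    (w : Ω → Ω → ℝ)
    (hw : ∀ α β, w α β =
      min (Real.log (1 + Real.sqrt (2 * (1 - ε) / (t * G.degree α) * max (1 / u α - E') 0)))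
          (Real.log (1 + Real.sqrt (2 * (1 - ε) / (t * G.degree β) * max (1 / u β - E') 0))))
    (S : Ω → ℝ)
    (hS : ∀ α, S α = sInf {s : ℝ | ∃ x ∈ Ubar, ∃ p : G.Walk x α,
      s = (p.darts.map fun d => w d.toProd.1 d.toProd.2).sum}) :
    ∑ α, ψ α ^ 2 * Real.exp (2 * S α) * (1 / u α - E')
      ≤ (1 - ε) * ∑ α, ψ α ^ 2 * Real.exp (2 * S α) * max (1 / u α - E') 0 := by
  set M : Matrix Ω Ω ℝ := H + K • (1 : Matrix Ω Ω ℝ) with hMdef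
  have hMsym : ∀ a b, M a b = M b a := by
    intro a b
    by_cases hab : a = b
    · rw [hab]
    · simp [hMdef, hH, Matrix.one_apply, hab, Ne.symm hab, G.adj_comm]
  have hMoff : ∀ a b, a ≠ b → M a b = if G.Adj a b then -t else 0 := by
    intro a b hab
    simp [hMdef, hH, hab]
  have hMu : M *ᵥ u = fun _ => 1 := by
    have hdet : IsUnit M.det := by
      by_contra hd
      rw [Matrix.nonsing_inv_apply_not_isUnit _ hd, Matrix.zero_mulVec] at hu
      obtain ⟨a⟩ := (inferInstance : Nonempty Ω)
      have := hupos a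
      simp [hu] at this
    rw [hu, Matrix.mulVec_mulVec, Matrix.mul_nonsing_inv _ hdet, Matrix.one_mulVec]
  have hMψ : M *ᵥ ψ = E' • ψ := by
    rw [hMdef, Matrix.add_mulVec, hψ, Matrix.smul_mulVec, Matrix.one_mulVec, hE', add_smul]
  have hwnn : ∀ a b, 0 ≤ w a b := by
    intro a b
    rw [hw]
    exact le_min (Real.log_nonneg (by linarith [Real.sqrt_nonneg (2 * (1 - ε) / (t * G.degree a) * max (1 / u a - E') 0)]))
      (Real.log_nonneg (by linarith [Real.sqrt_nonneg (2 * (1 - ε) / (t * G.degree b) * max (1 / u b - E') 0)]))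
  have hSle : ∀ a b, G.Adj a b → S b ≤ S a + w a b := by
    intro a b hab
    rw [← sub_le_iff_le_add, hS a]
    obtain ⟨x, hx⟩ := hUne
    obtain ⟨p⟩ := hG.preconnected x a
    refine le_csInf ⟨_, x, hx, p, rfl⟩ ?_
    rintro s ⟨y, hy, q, rfl⟩
    rw [sub_le_iff_le_add, hS b]
    refine csInf_le ⟨0, ?_⟩ ⟨y, hy, q.concat hab, ?_⟩
    · rintro s ⟨z, hz, r, rfl⟩
      refine List.sum_nonneg ?_
      intro x hx
      obtain ⟨d, -, rfl⟩ := List.mem_map.1 hx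
      exact hwnn _ _
    · simp [SimpleGraph.Walk.darts_concat]
  have hwsym : ∀ a b, w a b = w b a := by
    intro a b; rw [hw, hw b a, min_comm]
  set F : Ω → ℝ := fun a => max (1 / u a - E') 0 with hF
  set c : Ω → ℝ := fun a => 2 * (1 - ε) / (t * G.degree a) * F a with hc
  have hFnn : ∀ a, 0 ≤ F a := fun a => le_max_right _ _
  have hcnn : ∀ a, 0 ≤ c a := fun a =>
    mul_nonneg (div_nonneg (by linarith) (by positivity)) (hFnn a)
  set g : Ω → ℝ := fun a => Real.exp (S a) with hg
  have hgd : ∀ a b, G.Adj a b → (g a - g b) ^ 2 ≤ g a ^ 2 * c a := by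
    intro a b hab
    have h1 := exp_diff_sq (s := Real.sqrt (c a)) (hSle a b hab)
      (by rw [hwsym]; exact hSle b a hab.symm) (Real.sqrt_nonneg _)
      (by rw [hw]; exact min_le_left _ _)
    rwa [Real.sq_sqrt (hcnn a)] at h1
  have hg2 : ∀ a, Real.exp (2 * S a) = g a ^ 2 := by
    intro a; rw [hg, ← Real.exp_nat_mul]; norm_num
  have q1 := quad_id M hMsym g ψ
  have q2 := quad_id M hMsym (fun a => g a * ψ a / u a) u
  have hfu : ∀ a, g a * ψ a / u a * u a = g a * ψ a := fun a =>
    div_mul_cancel₀ _ (hupos a).ne'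
  simp only [hfu, hMu] at q2
  rw [hMψ] at q1
  have hneg : ∑ a, ∑ b, M a b * (g a * ψ a / u a - g b * ψ b / u b) ^ 2 * (u a * u b) ≤ 0 := by
    refine Finset.sum_nonpos fun a _ => Finset.sum_nonpos fun b _ => ?_
    by_cases hab : a = b
    · subst hab; simp
    · have h1 : M a b ≤ 0 := by
        rw [hMoff a b hab]; split_ifs <;> linarith
      have h2 : 0 ≤ (g a * ψ a / u a - g b * ψ b / u b) ^ 2 * (u a * u b) :=
        mul_nonneg (sq_nonneg _) (mul_pos (hupos a) (hupos b)).le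
      rw [mul_assoc]
      exact mul_nonpos_of_nonpos_of_nonneg h1 h2
  have hL : ∑ α, ψ α ^ 2 * Real.exp (2 * S α) * (1 / u α - E')
      = ∑ a, (g a * ψ a / u a) ^ 2 * u a * 1 - ∑ a, g a ^ 2 * ψ a * (E' • ψ) a := by
    rw [← Finset.sum_sub_distrib]
    refine Finset.sum_congr rfl fun a _ => ?_
    have := (hupos a).ne'
    rw [hg2]
    simp only [Pi.smul_apply, smul_eq_mul]
    field_simp
  set T : Ω → ℝ := fun a => ψ a ^ 2 * g a ^ 2 * c a with hT
  have hpt : -∑ a, ∑ b, M a b * (g a - g b) ^ 2 * (ψ a * ψ b)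
      ≤ ∑ a, ∑ b, ((if G.Adj a b then t / 2 * T a else 0)
          + (if G.Adj b a then t / 2 * T b else 0)) := by
    simp only [← Finset.sum_neg_distrib]
    refine Finset.sum_le_sum fun a _ => Finset.sum_le_sum fun b _ => ?_
    by_cases hab : G.Adj a b
    · rw [hMoff a b hab.ne]
      simp only [hab, hab.symm, if_true]
      have h1 := mul_le_mul_of_nonneg_left (hgd a b hab) (sq_nonneg (ψ a))
      have h2 := mul_le_mul_of_nonneg_left (hgd b a hab.symm) (sq_nonneg (ψ b))
      have h3 : (g a - g b) ^ 2 * (ψ a * ψ b) ≤ (T a + T b) / 2 := by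
        have h4 := mul_nonneg (sq_nonneg (g a - g b)) (sq_nonneg (ψ a - ψ b))
        simp only [hT]
        nlinarith
      nlinarith [mul_le_mul_of_nonneg_left h3 ht.le]
    · have hba : ¬ G.Adj b a := fun h => hab h.symm
      by_cases he : a = b
      · subst he; simp
      · rw [hMoff a b he]; simp [hab, hba]
  have hsum : ∑ a, ∑ b, ((if G.Adj a b then t / 2 * T a else 0)
          + (if G.Adj b a then t / 2 * T b else 0))
      = 2 * ∑ a, G.degree a * (t / 2 * T a) := by
    have e : ∑ a, ∑ b, (if G.Adj a b then t / 2 * T a else 0)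
        = ∑ a, G.degree a * (t / 2 * T a) := by
      refine Finset.sum_congr rfl fun a _ => ?_
      rw [← Finset.sum_filter, Finset.sum_const, nsmul_eq_mul, ← G.card_neighborFinset_eq_degree,
        SimpleGraph.neighborFinset_eq_filter]
    simp only [Finset.sum_add_distrib]
    rw [Finset.sum_comm (f := fun a b => if G.Adj b a then t / 2 * T b else 0), e]
    ring
  have hfin : ∑ a, G.degree a * (t / 2 * T a)
      ≤ (1 - ε) * ∑ α, ψ α ^ 2 * Real.exp (2 * S α) * F α := by
    rw [Finset.mul_sum]
    refine Finset.sum_le_sum fun a _ => ?_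
    rw [hg2]
    rcases Nat.eq_zero_or_pos (G.degree a) with h0 | h0
    · rw [h0, Nat.cast_zero, zero_mul]
      have := hFnn a
      exact mul_nonneg (by linarith) (by positivity)
    · have h0' : (0 : ℝ) < G.degree a := by exact_mod_cast h0
      apply le_of_eq
      simp only [hT, hc]
      field_simp
  rw [hL]
  linarith
end

section
/- Let ψ : Ω → ℝ be an eigenvector of H with eigenvalue E, set E' := E + K, and assume Σ_{α∈Ω} ψ(α)² ≤ 1. Assume the classically allowed region Ū := {α ∈ Ω : 1/u(α) − E' < 0} is nonempty and fix ε ∈ (0,1); let S be the Agmon action defined from ε, u, E' as in the context, and let U := Ω \ Ū. Then ε·Σ_{α∈U} ψ(α)²·e^{2S(α)}·(1/u(α) − E') ≤ max_{α∈Ū} (E' − 1/u(α)). (The exponentially weighted mass of an eigenstate in the classically forbidden region is controlled by the depth of the deepest classical well.) -/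
open Matrix Finset

theorem aux_ims {Ω : Type*} [Fintype Ω] (A : Ω → Ω → ℝ) (hA : ∀ α β, A α β = A β α)
    (v h : Ω → ℝ) :
    ∑ α, ∑ β, A α β * (h α * v α) * (h β * v β) =
      ∑ α, h α ^ 2 * v α * (∑ β, A α β * v β)
        - 1 / 2 * ∑ α, ∑ β, A α β * v α * v β * (h α - h β) ^ 2 := by
  have h1 : ∑ α, ∑ β, A α β * v α * v β * h β ^ 2 = ∑ α, ∑ β, A α β * v α * v β * h α ^ 2 := by
    rw [Finset.sum_comm]
    refine Finset.sum_congr rfl fun α _ => Finset.sum_congr rfl fun β _ => ?_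
    rw [hA β α]; ring
  have h2 : ∑ α, ∑ β, A α β * v α * v β * (h α - h β) ^ 2 =
      ∑ α, ∑ β, A α β * v α * v β * h α ^ 2 + ∑ α, ∑ β, A α β * v α * v β * h β ^ 2
       - 2 * ∑ α, ∑ β, A α β * (h α * v α) * (h β * v β) := by
    simp only [Finset.mul_sum, ← Finset.sum_add_distrib, ← Finset.sum_sub_distrib]
    refine Finset.sum_congr rfl fun α _ => Finset.sum_congr rfl fun β _ => ?_
    ring
  have h3 : ∑ α, h α ^ 2 * v α * (∑ β, A α β * v β) = ∑ α, ∑ β, A α β * v α * v β * h α ^ 2 := by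
    simp only [Finset.mul_sum]
    refine Finset.sum_congr rfl fun α _ => Finset.sum_congr rfl fun β _ => ?_
    ring
  rw [h2, h1, h3]; ring

theorem aux_exp (a b w r : ℝ) (hr : 0 ≤ r) (hw : w ≤ Real.log (1 + r))
    (h1 : b ≤ a + w) (h2 : a ≤ b + w) :
    (Real.exp a - Real.exp b) ^ 2 ≤ Real.exp a ^ 2 * r ^ 2 := by
  have hw' : Real.exp w ≤ 1 + r := by
    rw [← Real.le_log_iff_exp_le (by linarith)]; exact hw
  have e1 : Real.exp b ≤ Real.exp a * (1 + r) := by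
    calc Real.exp b ≤ Real.exp (a + w) := Real.exp_le_exp.mpr h1
      _ = Real.exp a * Real.exp w := Real.exp_add _ _
      _ ≤ _ := by gcongr
  have e2 : Real.exp a ≤ Real.exp b * (1 + r) := by
    calc Real.exp a ≤ Real.exp (b + w) := Real.exp_le_exp.mpr h2
      _ = Real.exp b * Real.exp w := Real.exp_add _ _
      _ ≤ _ := by gcongr
  have pa := Real.exp_pos a
  have pb := Real.exp_pos b
  rw [← mul_pow]
  apply sq_le_sq'
  · linarith
  · rcases le_total (Real.exp a) (Real.exp b) with h | h
    · have := mul_nonneg pa.le hr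
      linarith
    · have := mul_le_mul_of_nonneg_right h hr
      linarith

/-- The exponentially weighted mass of a (normalized) eigenstate in the classically
forbidden region `U = Ω \ Ū` is controlled by the depth of the deepest classical well:
`ε·Σ_{α ∈ U} ψ α² e^{2S α} (1/u α − E') ≤ max_{α ∈ Ū} (E' − 1/u α)`. -/
theorem mbll_forbidden_region_mass_bound
    {Ω : Type*} [Fintype Ω] [DecidableEq Ω] [Nonempty Ω]
    (G : SimpleGraph Ω) [DecidableRel G.Adj] (hG : G.Connected)
    (t : ℝ) (ht : 0 < t) (V : Ω → ℝ) (K : ℝ)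
    (H : Matrix Ω Ω ℝ)
    (hH : ∀ α β, H α β = if α = β then V α else if G.Adj α β then -t else 0)
    (hK : ∀ α, 0 ≤ K + V α - t * (G.degree α + 1))
    (u : Ω → ℝ) (hu : u = (H + K • (1 : Matrix Ω Ω ℝ))⁻¹ *ᵥ (fun _ => 1))
    (hupos : ∀ α, 0 < u α)
    (ψ : Ω → ℝ) (E : ℝ) (hψ : H *ᵥ ψ = E • ψ)
    (hnorm : ∑ α, ψ α ^ 2 ≤ 1)
    (E' : ℝ) (hE' : E' = E + K)
    (Ubar : Finset Ω) (hUbar : ∀ α, α ∈ Ubar ↔ 1 / u α - E' < 0) (hUne : Ubar.Nonempty)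
    (ε : ℝ) (hε0 : 0 < ε) (hε1 : ε < 1)
    (w : Ω → Ω → ℝ)
    (hw : ∀ α β, w α β =
      min (Real.log (1 + Real.sqrt (2 * (1 - ε) / (t * G.degree α) * max (1 / u α - E') 0)))
          (Real.log (1 + Real.sqrt (2 * (1 - ε) / (t * G.degree β) * max (1 / u β - E') 0))))
    (S : Ω → ℝ)
    (hS : ∀ α, S α = sInf {s : ℝ | ∃ x ∈ Ubar, ∃ p : G.Walk x α,
      s = (p.darts.map fun d => w d.toProd.1 d.toProd.2).sum}) :
    ε * ∑ α ∈ Ubarᶜ, ψ α ^ 2 * Real.exp (2 * S α) * (1 / u α - E')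
      ≤ Ubar.sup' hUne (fun α => E' - 1 / u α) := by
  classical
  set L : Matrix Ω Ω ℝ := H + K • (1 : Matrix Ω Ω ℝ) with hL
  have hdet : IsUnit L.det := by
    by_contra hne
    rw [Matrix.nonsing_inv_apply_not_isUnit _ hne] at hu
    obtain ⟨a⟩ := (inferInstance : Nonempty Ω)
    have := hupos a
    rw [hu] at this
    simp at this
  have hLu : ∀ α, ∑ β, L α β * u β = 1 := by
    intro α
    have : L *ᵥ u = fun _ => 1 := by
      rw [hu, Matrix.mulVec_mulVec, Matrix.mul_nonsing_inv _ hdet, Matrix.one_mulVec]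
    exact congrFun this α
  have hLψ : ∀ α, ∑ β, L α β * ψ β = E' * ψ α := by
    intro α
    have : L *ᵥ ψ = E' • ψ := by
      rw [hL, Matrix.add_mulVec, hψ, Matrix.smul_mulVec, Matrix.one_mulVec, hE', add_smul]
    exact congrFun this α
  have hLoff : ∀ α β, α ≠ β → L α β = if G.Adj α β then -t else 0 := by
    intro α β h
    simp [hL, hH, h]
  have hLsymm : ∀ α β, L α β = L β α := by
    intro α β
    by_cases h : α = β
    · rw [h]
    · rw [hLoff α β h, hLoff β α (Ne.symm h)]
      simp only [G.adj_comm β α]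
  -- the action
  have hwnn : ∀ α β, 0 ≤ w α β := by
    intro α β
    rw [hw]
    apply le_min <;> exact Real.log_nonneg (by linarith [Real.sqrt_nonneg (2 * (1 - ε) / (t * G.degree α) * max (1 / u α - E') 0), Real.sqrt_nonneg (2 * (1 - ε) / (t * G.degree β) * max (1 / u β - E') 0)])
  have hwsymm : ∀ α β, w α β = w β α := by
    intro α β
    rw [hw, hw, min_comm]
  have hbdd : ∀ α, ∀ s ∈ {s : ℝ | ∃ x ∈ Ubar, ∃ p : G.Walk x α,
      s = (p.darts.map fun d => w d.toProd.1 d.toProd.2).sum}, 0 ≤ s := by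
    rintro α s ⟨x, hx, p, rfl⟩
    apply List.sum_nonneg
    intro y hy
    obtain ⟨d, _, rfl⟩ := List.mem_map.mp hy
    exact hwnn _ _
  have hne : ∀ α, {s : ℝ | ∃ x ∈ Ubar, ∃ p : G.Walk x α,
      s = (p.darts.map fun d => w d.toProd.1 d.toProd.2).sum}.Nonempty := by
    intro α
    obtain ⟨x, hx⟩ := hUne
    obtain ⟨p⟩ := hG.preconnected x α
    exact ⟨_, x, hx, p, rfl⟩
  have hSnn : ∀ α, 0 ≤ S α := by
    intro α
    rw [hS]
    exact le_csInf (hne α) (hbdd α)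
  have hS0 : ∀ α ∈ Ubar, S α = 0 := by
    intro α hα
    apply le_antisymm _ (hSnn α)
    rw [hS]
    exact csInf_le ⟨0, hbdd α⟩ ⟨α, hα, SimpleGraph.Walk.nil, by simp⟩
  have hSlip : ∀ α β, G.Adj α β → S β ≤ S α + w α β := by
    intro α β hab
    rw [← sub_le_iff_le_add, hS α]
    apply le_csInf (hne α)
    rintro s ⟨x, hx, p, rfl⟩
    rw [sub_le_iff_le_add, hS β]
    refine csInf_le ⟨0, hbdd β⟩ ⟨x, hx, p.concat hab, ?_⟩
    simp [SimpleGraph.Walk.darts_concat]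
  set g : Ω → ℝ := fun α => Real.exp (S α) with hg
  -- gradient bound
  have hgrad : ∀ α β, G.Adj α β → (g α - g β) ^ 2 ≤
      g α ^ 2 * (2 * (1 - ε) / (t * G.degree α) * max (1 / u α - E') 0) := by
    intro α β hab
    have hnn : 0 ≤ 2 * (1 - ε) / (t * G.degree α) * max (1 / u α - E') 0 := by
      have : 0 ≤ 1 - ε := by linarith
      positivity
    have := aux_exp (S α) (S β) (w α β) _ (Real.sqrt_nonneg _)
      (by rw [hw]; exact min_le_left _ _) (hSlip α β hab)
      (by rw [hwsymm]; exact hSlip β α hab.symm)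
    rwa [Real.sq_sqrt hnn] at this
  have I1 := aux_ims (fun α β => L α β) hLsymm ψ g
  have I2 := aux_ims (fun α β => L α β) hLsymm u (fun α => g α * ψ α / u α)
  have hdiv : ∀ α, g α * ψ α / u α * u α = g α * ψ α :=
    fun α => div_mul_cancel₀ _ (hupos α).ne'
  simp only [hdiv, hLu, hLψ] at I1 I2
  have P2 : ∑ α, ∑ β, L α β * u α * u β * (g α * ψ α / u α - g β * ψ β / u β) ^ 2 ≤ 0 := by
    refine Finset.sum_nonpos fun α _ => Finset.sum_nonpos fun β _ => ?_
    by_cases h : α = β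
    · subst h; simp
    · have hl : L α β ≤ 0 := by
        rw [hLoff α β h]; split_ifs <;> linarith
      have := hupos α
      have := hupos β
      have h3 : 0 ≤ u α * u β * (g α * ψ α / u α - g β * ψ β / u β) ^ 2 := by positivity
      nlinarith [mul_nonneg (neg_nonneg.mpr hl) h3]
  have P1 : -(∑ α, ∑ β, L α β * ψ α * ψ β * (g α - g β) ^ 2) ≤
      ∑ α, ∑ β, (if G.Adj α β then t * ψ α ^ 2 * (g α - g β) ^ 2 else 0) := by
    have sw : ∑ α, ∑ β, (if G.Adj α β then t * ψ β ^ 2 * (g α - g β) ^ 2 else 0) =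
        ∑ α, ∑ β, (if G.Adj α β then t * ψ α ^ 2 * (g α - g β) ^ 2 else 0) := by
      rw [Finset.sum_comm]
      refine Finset.sum_congr rfl fun α _ => Finset.sum_congr rfl fun β _ => ?_
      simp only [G.adj_comm β α]
      split_ifs <;> ring
    have key : -(∑ α, ∑ β, L α β * ψ α * ψ β * (g α - g β) ^ 2) ≤
      1 / 2 * (∑ α, ∑ β, (if G.Adj α β then t * ψ α ^ 2 * (g α - g β) ^ 2 else 0)
       + ∑ α, ∑ β, (if G.Adj α β then t * ψ β ^ 2 * (g α - g β) ^ 2 else 0)) := by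
      simp only [Finset.mul_sum, ← Finset.sum_add_distrib, ← Finset.sum_neg_distrib]
      refine Finset.sum_le_sum fun α _ => Finset.sum_le_sum fun β _ => ?_
      by_cases h : α = β
      · subst h; simp
      · rw [hLoff α β h]
        split_ifs
        · have : 0 ≤ t * (ψ α - ψ β) ^ 2 * (g α - g β) ^ 2 := by positivity
          nlinarith
        · simp
    rw [sw] at key
    linarith
  have P3 : ∑ α, ∑ β, (if G.Adj α β then t * ψ α ^ 2 * (g α - g β) ^ 2 else 0) ≤
      2 * ((1 - ε) * ∑ α, ψ α ^ 2 * g α ^ 2 * max (1 / u α - E') 0) := by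
    rw [Finset.mul_sum, Finset.mul_sum]
    refine Finset.sum_le_sum fun α _ => ?_
    set M := max (1 / u α - E') 0 with hM
    have hM0 : 0 ≤ M := le_max_right _ _
    have he : 0 ≤ 1 - ε := by linarith
    calc ∑ β, (if G.Adj α β then t * ψ α ^ 2 * (g α - g β) ^ 2 else 0)
        ≤ ∑ β, (if G.Adj α β then t * ψ α ^ 2 * (g α ^ 2 * (2 * (1 - ε) / (t * G.degree α) * M)) else 0) := by
          refine Finset.sum_le_sum fun β _ => ?_
          split_ifs with h
          · exact mul_le_mul_of_nonneg_left (hgrad α β h) (by positivity)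
          · exact le_rfl
      _ = G.degree α * (t * ψ α ^ 2 * (g α ^ 2 * (2 * (1 - ε) / (t * G.degree α) * M))) := by
          rw [← Finset.sum_filter, Finset.sum_const, nsmul_eq_mul,
            ← SimpleGraph.card_neighborFinset_eq_degree, SimpleGraph.neighborFinset_eq_filter]
      _ ≤ _ := by
          by_cases hd : (G.degree α : ℝ) = 0
          · rw [hd, zero_mul]; positivity
          · apply le_of_eq
            field_simp
  have Q : ∑ α, ψ α ^ 2 * g α ^ 2 * (1 / u α - E') ≤
      (1 - ε) * ∑ α, ψ α ^ 2 * g α ^ 2 * max (1 / u α - E') 0 := by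
    have r : ∑ α, ψ α ^ 2 * g α ^ 2 * (1 / u α - E') =
        ∑ α, (g α * ψ α / u α) ^ 2 * u α * 1 - ∑ α, g α ^ 2 * ψ α * (E' * ψ α) := by
      rw [← Finset.sum_sub_distrib]
      refine Finset.sum_congr rfl fun α _ => ?_
      have := (hupos α).ne'
      field_simp
    linarith
  rw [← Finset.sum_add_sum_compl Ubar, ← Finset.sum_add_sum_compl Ubar
    (fun α => ψ α ^ 2 * g α ^ 2 * max (1 / u α - E') 0)] at Q
  have z1 : ∑ α ∈ Ubar, ψ α ^ 2 * g α ^ 2 * max (1 / u α - E') 0 = 0 := by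
    refine Finset.sum_eq_zero fun α hα => ?_
    rw [max_eq_right ((hUbar α).mp hα).le, mul_zero]
  have z2 : ∑ α ∈ Ubarᶜ, ψ α ^ 2 * g α ^ 2 * max (1 / u α - E') 0 =
      ∑ α ∈ Ubarᶜ, ψ α ^ 2 * g α ^ 2 * (1 / u α - E') := by
    refine Finset.sum_congr rfl fun α hα => ?_
    rw [max_eq_left]
    rw [Finset.mem_compl, hUbar, not_lt] at hα
    exact hα
  have z3 : ∑ α ∈ Ubarᶜ, ψ α ^ 2 * Real.exp (2 * S α) * (1 / u α - E') =
      ∑ α ∈ Ubarᶜ, ψ α ^ 2 * g α ^ 2 * (1 / u α - E') := by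
    refine Finset.sum_congr rfl fun α _ => ?_
    rw [two_mul, Real.exp_add, ← sq]
  rw [z1, z2] at Q
  rw [z3]
  set D := Ubar.sup' hUne (fun α => E' - 1 / u α) with hD
  have hDle : ∀ α ∈ Ubar, E' - 1 / u α ≤ D :=
    fun α hα => Finset.le_sup' (fun α => E' - 1 / u α) hα
  have hD0 : 0 ≤ D := by
    obtain ⟨x, hx⟩ := hUne
    have := hDle x hx
    have := (hUbar x).mp hx
    linarith
  have z4 : -(∑ α ∈ Ubar, ψ α ^ 2 * g α ^ 2 * (1 / u α - E')) ≤ D := by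
    calc -(∑ α ∈ Ubar, ψ α ^ 2 * g α ^ 2 * (1 / u α - E'))
        ≤ ∑ α ∈ Ubar, ψ α ^ 2 * D := by
          rw [← Finset.sum_neg_distrib]
          refine Finset.sum_le_sum fun α hα => ?_
          have : g α = 1 := by simp [hg, hS0 α hα]
          rw [this]
          nlinarith [mul_le_mul_of_nonneg_left (hDle α hα) (sq_nonneg (ψ α))]
      _ ≤ ∑ α, ψ α ^ 2 * D :=
          Finset.sum_le_sum_of_subset_of_nonneg (Finset.subset_univ _)
            (fun _ _ _ => by positivity)
      _ = (∑ α, ψ α ^ 2) * D := by rw [Finset.sum_mul]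
      _ ≤ D := by nlinarith
  linarith
end

section
/- Let W ⊆ Ω be nonempty, let H_W denote the principal submatrix of H on W (i.e., the Hamiltonian of the subgraph of G induced by W, with zero Dirichlet conditions outside W), and note that K + V(α) − t·(deg_W(α)+1) ≥ 0 for all α ∈ W, where deg_W is the degree in the induced subgraph. Then H_W + K·I_W is invertible, its landscape u^{(W)} := (H_W + K·I_W)⁻¹𝟙_W is entrywise strictly positive, and u^{(W)}(α) ≤ u(α) for every α ∈ W. Consequently, for any real numbers E'_W ≤ E', one has 1/u(α) − E' ≤ 1/u^{(W)}(α) − E'_W for every α ∈ W. (Core of Lemma IV.4: restricting the problem to a well can only deepen the effective potential, so the global Agmon action lower-bounds decay of well eigenstates.) -/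
open Matrix Finset

lemma aux_maxp {ι : Type*} [Fintype ι] (A : Matrix ι ι ℝ)
    (hoff : ∀ i j, i ≠ j → A i j ≤ 0) (hrow : ∀ i, 0 < ∑ j, A i j)
    (v : ι → ℝ) (hv : ∀ i, 0 ≤ (A *ᵥ v) i) : ∀ i, 0 ≤ v i := by
  intro k
  by_contra hk
  push Not at hk
  haveI : Nonempty ι := ⟨k⟩
  obtain ⟨i, hi⟩ := Finite.exists_min v
  have h1 : (A *ᵥ v) i ≤ (∑ j, A i j) * v i := by
    rw [Finset.sum_mul]
    simp only [Matrix.mulVec, dotProduct]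
    apply Finset.sum_le_sum
    intro j _
    by_cases h : i = j
    · subst h; exact le_rfl
    · exact mul_le_mul_of_nonpos_left (hi j) (hoff i j h)
  have h2 : (∑ j, A i j) * v i < 0 := mul_neg_of_pos_of_neg (hrow i) ((hi k).trans_lt hk)
  linarith [hv i]

lemma aux_unit {ι : Type*} [Fintype ι] [DecidableEq ι] (A : Matrix ι ι ℝ)
    (hoff : ∀ i j, i ≠ j → A i j ≤ 0) (hrow : ∀ i, 0 < ∑ j, A i j) : IsUnit A := by
  rw [← Matrix.mulVec_injective_iff_isUnit]
  have key : ∀ v w, A *ᵥ v = A *ᵥ w → ∀ i, v i ≤ w i := by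
    intro v w h i
    have := aux_maxp A hoff hrow (w - v) (by simp [Matrix.mulVec_sub, h]) i
    simpa using this
  intro v w h
  funext i
  exact le_antisymm (key v w h i) (key w v h.symm i)

lemma aux_inv {ι : Type*} [Fintype ι] [DecidableEq ι] (A : Matrix ι ι ℝ)
    (h : IsUnit A) (b : ι → ℝ) : A *ᵥ (A⁻¹ *ᵥ b) = b := by
  rw [Matrix.mulVec_mulVec, Matrix.mul_nonsing_inv _ ((Matrix.isUnit_iff_isUnit_det A).1 h),
    Matrix.one_mulVec]

/-- **Core of Lemma IV.4**: restricting the eigenvalue problem to a well `W` (with zero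
Dirichlet conditions outside) can only deepen the effective potential. The constant `K`
still dominates on the induced subgraph, `H_W + K·I_W` is invertible, its landscape
`u^{(W)} = (H_W + K·I_W)⁻¹ 𝟙_W` is entrywise strictly positive, `u^{(W)} ≤ u` on `W`,
and hence for any `E'_W ≤ E'` one has `1/u − E' ≤ 1/u^{(W)} − E'_W` on `W`. -/
theorem mbll_well_landscape_comparison
    {Ω : Type*} [Fintype Ω] [DecidableEq Ω] [Nonempty Ω]
    (G : SimpleGraph Ω) [DecidableRel G.Adj] (hG : G.Connected)
    (t : ℝ) (ht : 0 < t) (V : Ω → ℝ) (K : ℝ)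
    (H : Matrix Ω Ω ℝ)
    (hH : ∀ α β, H α β = if α = β then V α else if G.Adj α β then -t else 0)
    (hK : ∀ α, 0 ≤ K + V α - t * (G.degree α + 1))
    (u : Ω → ℝ) (hu : u = (H + K • (1 : Matrix Ω Ω ℝ))⁻¹ *ᵥ (fun _ => 1))
    (hupos : ∀ α, 0 < u α)
    (W : Finset Ω) (hWne : W.Nonempty)
    (HW : Matrix W W ℝ) (hHW : HW = H.submatrix Subtype.val Subtype.val)
    (uW : W → ℝ) (huW : uW = (HW + K • (1 : Matrix W W ℝ))⁻¹ *ᵥ (fun _ => 1)) :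
    (∀ a ∈ W, 0 ≤ K + V a - t * ((W.filter fun b => G.Adj a b).card + 1)) ∧
    IsUnit (HW + K • (1 : Matrix W W ℝ)) ∧
    (∀ a : W, 0 < uW a) ∧
    (∀ a : W, uW a ≤ u a) ∧
    (∀ E'W E' : ℝ, E'W ≤ E' → ∀ a : W, 1 / u a - E' ≤ 1 / uW a - E'W) := by
  have hcard : ∀ a : Ω, t * ((W.filter fun b => G.Adj a b).card : ℝ) ≤ t * G.degree a := by
    intro a
    apply mul_le_mul_of_nonneg_left _ ht.le
    rw [← G.card_neighborFinset_eq_degree]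
    exact_mod_cast Finset.card_le_card (by intro b; simp)
  set A : Matrix Ω Ω ℝ := H + K • (1 : Matrix Ω Ω ℝ) with hA
  have hAW : HW + K • (1 : Matrix W W ℝ) = A.submatrix Subtype.val Subtype.val := by
    ext i j
    by_cases h : i = j
    · subst h; simp [hA, hHW]
    · have h2 : (i : Ω) ≠ j := fun h3 => h (Subtype.ext h3)
      simp [hA, hHW, h, h2]
  rw [hAW] at huW ⊢
  have hoff : ∀ i j, i ≠ j → A i j ≤ 0 := by
    intro i j h
    simp only [hA, Matrix.add_apply, hH, Matrix.smul_apply, Matrix.one_apply, h, if_false]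
    split_ifs <;> simp <;> linarith
  have hsum : ∀ i, 0 < ∑ j, A i j := by
    intro i
    have e : ∀ j, A i j = (if i = j then K + V i else 0) + (if G.Adj i j then -t else 0) := by
      intro j
      by_cases h : i = j
      · subst h; simp [hA, hH, add_comm]
      · simp [hA, hH, h, Matrix.one_apply]
    have e2 : ∑ j, (if G.Adj i j then -t else 0) = -(t * G.degree i) := by
      rw [← G.card_neighborFinset_eq_degree, G.neighborFinset_eq_filter, ← Finset.sum_filter]
      simp [mul_comm]
    simp only [e, Finset.sum_add_distrib, e2]
    simp
    linarith [hK i]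
  have hsplit : ∀ (i : W) (f : Ω → ℝ), (∀ j, 0 ≤ f j) →
      ∑ j, A i j * f j ≤ ∑ j : W, A i j * f j := by
    intro i f hf
    rw [Finset.sum_coe_sort W (fun j => A i j * f j), ← Finset.sum_add_sum_compl W]
    have : ∑ j ∈ Wᶜ, A i j * f j ≤ 0 := by
      apply Finset.sum_nonpos
      intro j hj
      refine mul_nonpos_of_nonpos_of_nonneg (hoff _ _ ?_) (hf j)
      rintro rfl
      exact (Finset.mem_compl.1 hj) i.2
    linarith
  set B : Matrix W W ℝ := A.submatrix Subtype.val Subtype.val with hB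
  have hBoff : ∀ i j, i ≠ j → B i j ≤ 0 := fun i j h =>
    hoff _ _ (fun h' => h (Subtype.ext h'))
  have hBsum : ∀ i, 0 < ∑ j, B i j := by
    intro i
    have := hsplit i (fun _ => 1) (fun _ => zero_le_one)
    simp only [mul_one] at this
    exact (hsum i).trans_le this
  have hBu := aux_unit B hBoff hBsum
  have h1 : A *ᵥ u = fun _ => 1 := by rw [hu]; exact aux_inv A (aux_unit A hoff hsum) _
  have h2 : B *ᵥ uW = fun _ => 1 := by rw [huW]; exact aux_inv B hBu _
  have hnn := aux_maxp B hBoff hBsum uW (by simp [h2])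
  have hpos : ∀ a, 0 < uW a := by
    intro a
    refine lt_of_le_of_ne (hnn a) fun h0 => ?_
    have h3 := congrFun h2 a
    have h4 : (B *ᵥ uW) a ≤ 0 := by
      simp only [Matrix.mulVec, dotProduct]
      apply Finset.sum_nonpos
      intro j _
      by_cases h : a = j
      · subst h; simp [← h0]
      · exact mul_nonpos_of_nonpos_of_nonneg (hBoff _ _ h) (hnn j)
    linarith
  have hle : ∀ a : W, uW a ≤ u a := by
    intro a
    have := aux_maxp B hBoff hBsum ((fun a : W => u a) - uW) (by
      intro i
      rw [Matrix.mulVec_sub, h2]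
      have h3 := hsplit i u (fun j => (hupos j).le)
      have h4 := congrFun h1 i
      simp only [Matrix.mulVec, dotProduct] at h4
      simp only [Pi.sub_apply, Matrix.mulVec, dotProduct, hB, Matrix.submatrix_apply]
      linarith) a
    simpa using this
  refine ⟨fun a _ => ?_, hBu, hpos, hle, fun E'W E' h a => ?_⟩
  · linarith [hK a, hcard a]
  · linarith [one_div_le_one_div_of_le (hpos a) (hle a)]
end

section
/- For all functions ζ, η, φ : Ω → ℝ, the following exact identity holds: Σ_{α∈Ω} ζ(α)·(H(η·φ))(α) − Σ_{α∈Ω} ζ(α)·η(α)·(Hφ)(α) = t·Σ_{{α,β} edge of G} (η(β) − η(α))·(φ(α)·ζ(β) − φ(β)·ζ(α)), where η·φ denotes the entrywise product and the edge sum counts each unordered edge once. (The boundary/commutator identity underlying the proofs of Locality Theorems I and II: cutting off a function by η produces a residual supported only on edges across which η changes.) -/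
open Matrix Finset

/-- The boundary/commutator identity underlying the Locality Theorems: for all
`ζ, η, φ : Ω → ℝ`,
`Σ_α ζ α · (H(η·φ)) α − Σ_α ζ α · η α · (Hφ) α
  = t · Σ_{edges {α,β}} (η β − η α)(φ α ζ β − φ β ζ α)`,
the edge sum counting each unordered edge of `G` once. -/
theorem mbll_cutoff_commutator_identity
    {Ω : Type*} [Fintype Ω] [DecidableEq Ω] [Nonempty Ω]
    (G : SimpleGraph Ω) [DecidableRel G.Adj]
    (t : ℝ) (ht : 0 < t) (V : Ω → ℝ)
    (H : Matrix Ω Ω ℝ)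
    (hH : ∀ α β, H α β = if α = β then V α else if G.Adj α β then -t else 0) :
    ∀ ζ η φ : Ω → ℝ,
      ∑ α, ζ α * (H *ᵥ fun β => η β * φ β) α - ∑ α, ζ α * η α * (H *ᵥ φ) α
        = t * ∑ e ∈ G.edgeFinset,
            Sym2.lift ⟨fun α β => (η β - η α) * (φ α * ζ β - φ β * ζ α),
              fun α β => by ring⟩ e := by
  intro ζ η φ
  have key : ∀ g : Ω → Ω → ℝ, ∑ α, ∑ β, (if G.Adj α β then g α β else 0)
      = ∑ e ∈ G.edgeFinset, Sym2.lift ⟨fun α β => g α β + g β α, fun α β => by ring⟩ e := by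
    intro g
    rw [← Finset.sum_product', ← Finset.sum_filter]
    rw [← Finset.sum_fiberwise_of_maps_to (t := G.edgeFinset)
      (g := fun p : Ω × Ω => s(p.1, p.2)) (by
        intro p hp
        simpa using hp)]
    refine Finset.sum_congr rfl ?_
    intro e he
    induction e using Sym2.ind with
    | _ a b =>
      have hab : G.Adj a b := by simpa using he
      have hne : a ≠ b := hab.ne
      have hf : (((Finset.univ ×ˢ Finset.univ : Finset (Ω × Ω)).filter
          (fun p => G.Adj p.1 p.2)).filter (fun p => s(p.1, p.2) = s(a, b)))
          = {(a, b), (b, a)} := by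
        ext ⟨x, y⟩
        simp only [Finset.mem_filter, Finset.mem_product, Finset.mem_univ, true_and, and_true,
          Sym2.eq_iff, Finset.mem_insert, Finset.mem_singleton, Prod.mk.injEq]
        constructor
        · exact fun h => h.2
        · rintro (⟨rfl, rfl⟩ | ⟨rfl, rfl⟩)
          · exact ⟨hab, Or.inl ⟨rfl, rfl⟩⟩
          · exact ⟨hab.symm, Or.inr ⟨rfl, rfl⟩⟩
      rw [hf, Finset.sum_pair (by simp [hne])]
      simp
  have h1 : ∑ α, ζ α * (H *ᵥ fun β => η β * φ β) α - ∑ α, ζ α * η α * (H *ᵥ φ) α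
      = ∑ α, ∑ β, (if G.Adj α β then -t * (ζ α * (η β - η α) * φ β) else 0) := by
    rw [← Finset.sum_sub_distrib]
    refine Finset.sum_congr rfl fun α _ => ?_
    simp only [Matrix.mulVec, dotProduct]
    rw [Finset.mul_sum, Finset.mul_sum, ← Finset.sum_sub_distrib]
    refine Finset.sum_congr rfl fun β _ => ?_
    rw [hH]
    by_cases h : α = β
    · subst h
      simp
      ring
    · by_cases h' : G.Adj α β
      · simp only [h, h', if_true, if_false]
        ring
      · simp [h, h']
  rw [h1, key, Finset.mul_sum]
  refine Finset.sum_congr rfl fun e _ => ?_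
  induction e using Sym2.ind with
  | _ a b =>
    simp only [Sym2.lift_mk]
    ring
end

section
/- Let Ω be a finite nonempty set, let D be the diagonal real Ω×Ω matrix with diagonal entries 𝔈(α) satisfying 𝔈(α) ≥ δ₀ for some δ₀ > 0, and let A be a real Ω×Ω matrix whose rows satisfy Σ_{β∈Ω} |A(α,β)| ≤ q·δ₀ for every α, for some 0 ≤ q < 1. Then: (i) for every n ≥ 0 and every α, |(D⁻¹·(A·D⁻¹)ⁿ·𝟙)(α)| ≤ qⁿ/𝔈(α), so the locator series for the landscape is dominated by a geometric series; (ii) D + A is invertible and Σ_{n=0}^{∞} (−1)ⁿ·D⁻¹·(A·D⁻¹)ⁿ·𝟙 = (D + A)⁻¹·𝟙. (Theorem V.1: the locator expansion for the many-body localization landscape u = (U + T + V)⁻¹𝟙 converges for sufficiently small hopping and interaction; in the Fock-space setting D has entries 𝔈(α) = Σᵢ εᵢ·nᵢ^{(α)} ≥ δN and the row-sum hypothesis holds because every node of the Fock-space graph of a d-dimensional cubic lattice has degree O(N), and crucially no energy denominators E − 𝔈(α) — and hence no resonances — appear.) -/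
open Matrix Finset

/-- **Theorem V.1 (convergent locator expansion for the landscape)**: if the diagonal
matrix `D = diag 𝔈` has entries `𝔈 α ≥ δ₀ > 0` and the perturbation `A` has row sums
`Σ_β |A α β| ≤ q·δ₀` with `0 ≤ q < 1`, then (i) the `n`-th locator term is dominated by
a geometric series, `|(D⁻¹ (A D⁻¹)ⁿ 𝟙) α| ≤ qⁿ/𝔈 α`; and (ii) `D + A` is invertible and
the alternating locator series sums to the landscape, `Σₙ (−1)ⁿ D⁻¹ (A D⁻¹)ⁿ 𝟙 = (D+A)⁻¹ 𝟙`.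
Crucially no energy denominators `E − 𝔈 α` (hence no resonances) appear. -/
theorem mbll_locator_expansion_converges
    {Ω : Type*} [Fintype Ω] [DecidableEq Ω] [Nonempty Ω]
    (𝔈 : Ω → ℝ) (δ₀ : ℝ) (hδ₀ : 0 < δ₀) (h𝔈 : ∀ α, δ₀ ≤ 𝔈 α)
    (A : Matrix Ω Ω ℝ) (q : ℝ) (hq0 : 0 ≤ q) (hq1 : q < 1)
    (hA : ∀ α, ∑ β, |A α β| ≤ q * δ₀)
    (D : Matrix Ω Ω ℝ) (hD : D = Matrix.diagonal 𝔈) :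
    (∀ (n : ℕ) (α : Ω),
        |((D⁻¹ * (A * D⁻¹) ^ n) *ᵥ (fun _ => 1)) α| ≤ q ^ n / 𝔈 α) ∧
    IsUnit (D + A) ∧
    (∑' n : ℕ, ((-1 : ℝ) ^ n • ((D⁻¹ * (A * D⁻¹) ^ n) *ᵥ (fun _ => 1))))
      = (D + A)⁻¹ *ᵥ (fun _ => 1) := by
  have hpos : ∀ α, 0 < 𝔈 α := fun α => lt_of_lt_of_le hδ₀ (h𝔈 α)
  have hdet : IsUnit D.det := by
    rw [hD, Matrix.det_diagonal]
    exact (Finset.prod_ne_zero_iff.mpr fun α _ => (hpos α).ne').isUnit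
  have hDD : D * D⁻¹ = 1 := Matrix.mul_nonsing_inv D hdet
  have hDinv : D⁻¹ = Matrix.diagonal (fun α => (𝔈 α)⁻¹) := by
    apply Matrix.inv_eq_right_inv
    rw [hD, Matrix.diagonal_mul_diagonal, ← Matrix.diagonal_one]
    congr 1
    funext α
    exact mul_inv_cancel₀ (hpos α).ne'
  have hDv : ∀ (w : Ω → ℝ) (α : Ω), (D⁻¹ *ᵥ w) α = w α / 𝔈 α := by
    intro w α
    rw [hDinv, Matrix.mulVec_diagonal, div_eq_inv_mul]
  have hcontr : ∀ (w : Ω → ℝ) (c : ℝ), 0 ≤ c → (∀ β, |w β| ≤ c) →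
      ∀ α, |((A * D⁻¹) *ᵥ w) α| ≤ q * c := by
    intro w c hc hw α
    rw [← Matrix.mulVec_mulVec]
    calc |(A *ᵥ (D⁻¹ *ᵥ w)) α| = |∑ β, A α β * (w β / 𝔈 β)| := by
          simp only [Matrix.mulVec, dotProduct] at hDv ⊢
          simp only [hDv]
      _ ≤ ∑ β, |A α β * (w β / 𝔈 β)| := Finset.abs_sum_le_sum_abs _ _
      _ ≤ ∑ β, |A α β| * (c / δ₀) := by
          apply Finset.sum_le_sum
          intro β _
          rw [abs_mul, abs_div, abs_of_pos (hpos β)]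
          exact mul_le_mul_of_nonneg_left (div_le_div₀ hc (hw β) hδ₀ (h𝔈 β)) (abs_nonneg _)
      _ = (∑ β, |A α β|) * (c / δ₀) := by rw [Finset.sum_mul]
      _ ≤ q * δ₀ * (c / δ₀) := mul_le_mul_of_nonneg_right (hA α) (by positivity)
      _ = q * c := by field_simp
  have hpow : ∀ (n : ℕ) (α : Ω), |((A * D⁻¹) ^ n *ᵥ (fun _ => (1 : ℝ))) α| ≤ q ^ n := by
    intro n
    induction n with
    | zero => intro α; simp
    | succ k ih =>
      intro α
      rw [pow_succ', ← Matrix.mulVec_mulVec, pow_succ']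
      exact hcontr _ _ (by positivity) ih α
  have hunit : IsUnit (D + A) := by
    rw [Matrix.isUnit_iff_isUnit_det]
    refine (det_ne_zero_of_sum_row_lt_diag fun k => ?_).isUnit
    have h1 : ∑ j ∈ Finset.univ.erase k, ‖(D + A) k j‖ = ∑ j ∈ Finset.univ.erase k, |A k j| := by
      apply Finset.sum_congr rfl
      intro j hj
      rw [hD, Matrix.add_apply, Matrix.diagonal_apply_ne' _ (Finset.ne_of_mem_erase hj), zero_add,
        Real.norm_eq_abs]
    have h2 := Finset.add_sum_erase Finset.univ (fun j => |A k j|) (Finset.mem_univ k)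
    have h3 := hA k
    have h4 : (D + A) k k = 𝔈 k + A k k := by simp [hD]
    rw [h1, h4, Real.norm_eq_abs]
    have h5 := le_abs_self (𝔈 k + A k k)
    have h6 := neg_abs_le (A k k)
    have h7 := h𝔈 k
    have h8 : q * δ₀ < δ₀ := by nlinarith
    linarith
  refine ⟨?_, hunit, ?_⟩
  · intro n α
    rw [← Matrix.mulVec_mulVec, hDv, abs_div, abs_of_pos (hpos α)]
    exact div_le_div_of_nonneg_right (hpow n α) (hpos α).le
  · set t : ℕ → Ω → ℝ := fun n => (-1 : ℝ) ^ n • ((A * D⁻¹) ^ n *ᵥ (fun _ => (1 : ℝ))) with ht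
    have hts : Summable t := by
      refine Summable.of_norm_bounded (summable_geometric_of_lt_one hq0 hq1) fun n => ?_
      rw [pi_norm_le_iff_of_nonneg (by positivity)]
      intro α
      simpa [ht, abs_mul] using hpow n α
    have hmap : ∀ (M : Matrix Ω Ω ℝ) , M *ᵥ (∑' n, t n) = ∑' n, M *ᵥ t n := fun M =>
      (LinearMap.toContinuousLinearMap M.mulVecLin).map_tsum hts
    have hT : (∑' n, t n) + (A * D⁻¹) *ᵥ (∑' n, t n) = fun _ => 1 := by
      have h0 := hts.tsum_eq_zero_add
      have h1 : ∀ n, t (n + 1) = - ((A * D⁻¹) *ᵥ t n) := by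
        intro n
        simp only [ht, pow_succ', Matrix.mulVec_smul, Matrix.mulVec_mulVec]
        simp
      simp only [h1] at h0
      rw [tsum_neg, ← hmap] at h0
      have h2 : t 0 = fun _ => 1 := by simp [ht]
      rw [h2] at h0
      nth_rewrite 1 [h0]
      abel
    have hS : (∑' n : ℕ, ((-1 : ℝ) ^ n • ((D⁻¹ * (A * D⁻¹) ^ n) *ᵥ (fun _ => (1 : ℝ)))))
        = D⁻¹ *ᵥ (∑' n, t n) := by
      rw [hmap]
      simp only [ht, Matrix.mulVec_smul, Matrix.mulVec_mulVec]
    have hfin : (D + A) *ᵥ (D⁻¹ *ᵥ (∑' n, t n)) = fun _ => 1 := by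
      rw [Matrix.mulVec_mulVec, add_mul, hDD, Matrix.add_mulVec, Matrix.one_mulVec, hT]
    rw [hS, ← hfin, Matrix.mulVec_mulVec,
      Matrix.nonsing_inv_mul _ ((Matrix.isUnit_iff_isUnit_det _).mp hunit), Matrix.one_mulVec]
end
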